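/- There exists a constant C > 0 such that for every integer R ≥ 4 the following holds: if α ∈ (0,1/2) is irrational and its NICF expansion is eventually periodic with period four, the signed partial quotients (ε_i a_i) eventually cycling through −R, R, −(R+1), R+1, then |ρ(α) − (1/4)(1 − 3/R + 4/R²)| ≤ C/R³ when R is even, and |ρ(α) − (1/4)(1 − 3/R + 5/R²)| ≤ C/R³ when R is odd. -/

import Mathlib

open Filter Finset

attribute [local instance] Classical.propDecidable

/-- Distance from `x` to the nearest integer, `‖x‖`. -/
noncomputable def nint (x : ℝ) : ℝ := |x - round x|

/-- The two-sided inhomogeneous approximation constant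
`M(α,γ) = liminf_{|n|→∞} |n|·‖nα-γ‖`. -/
noncomputable def Mval (α γ : ℝ) : ℝ :=
  Filter.liminf (fun n : ℤ => (|n| : ℝ) * nint (n * α - γ)) Filter.cofinite

/-- `ρ(α) = sup { M(α,γ) : γ ∉ ℤ + αℤ }`. -/
noncomputable def rho (α : ℝ) : ℝ :=
  sSup {m : ℝ | ∃ γ : ℝ, (¬∃ p q : ℤ, γ = (p : ℝ) + (q : ℝ) * α) ∧ m = Mval α γ}

/-- The tails `α_i` of the nearest integer continued fraction expansion of `α`. -/
noncomputable def nicfT (α : ℝ) : ℕ → ℝ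
  | 0 => α
  | i + 1 =>
    if Int.fract (nicfT α i)⁻¹ ≤ 1 / 2 then Int.fract (nicfT α i)⁻¹
    else 1 - Int.fract (nicfT α i)⁻¹

/-- The partial quotients `a_i` (meaningful for `i ≥ 1`) of the NICF expansion. -/
noncomputable def nicfA (α : ℝ) : ℕ → ℤ
  | 0 => 0
  | i + 1 => if Int.fract (nicfT α i)⁻¹ ≤ 1 / 2 then ⌊(nicfT α i)⁻¹⌋ else ⌈(nicfT α i)⁻¹⌉

/-- The signs `ε_i` of the NICF expansion (`ε_1 = 1`). -/
noncomputable def nicfE (α : ℝ) : ℕ → ℤ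
  | 0 => 1
  | 1 => 1
  | i + 2 => if Int.fract (nicfT α i)⁻¹ ≤ 1 / 2 then 1 else -1

/-- `nicfD α n = D_{n-1} = α_0 α_1 ⋯ α_{n-1}` (so `nicfD α 0 = 1`, `nicfD α 1 = α`). -/
noncomputable def nicfD (α : ℝ) (n : ℕ) : ℝ := ∏ j ∈ Finset.range n, nicfT α j

/-- The number of indices `1 ≤ k ≤ i` with `a_k` odd. -/
noncomputable def oddIdx (α : ℝ) (i : ℕ) : ℕ :=
  ((Finset.Icc 1 i).filter fun k => Odd (nicfA α k)).card

/-- `λ_i`: zero if `a_i` is even, `(-1)^j` if `a_i = a_{n_j}` is the `j`-th odd partial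
quotient. -/
noncomputable def lamStar (α : ℝ) (i : ℕ) : ℤ :=
  if Odd (nicfA α i) then (-1) ^ oddIdx α i else 0

/-- `γ_* = Σ_{i≥1} (a_i - 1 + ε_i + λ_i)/2 · D_{i-1}`. -/
noncomputable def gammaStar (α : ℝ) : ℝ :=
  ∑' k : ℕ,
    (((nicfA α (k + 1) : ℝ) - 1 + (nicfE α (k + 1) : ℝ) + (lamStar α (k + 1) : ℝ)) / 2) *
      nicfD α (k + 1)

/-- `λ'_i`: zero if `a_i` is even, one if `a_i` is odd. -/
noncomputable def lamStar2 (α : ℝ) (i : ℕ) : ℤ := if Odd (nicfA α i) then 1 else 0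

/-- `γ_** = Σ_{i≥1} (a_i + λ'_i)/2 · D_{i-1}`. -/
noncomputable def gammaStar2 (α : ℝ) : ℝ :=
  ∑' k : ℕ, (((nicfA α (k + 1) : ℝ) + (lamStar2 α (k + 1) : ℝ)) / 2) * nicfD α (k + 1)

/-- The denominators `q_i`: `q_0 = 1`, `q_1 = a_1`, `q_i = a_i q_{i-1} + ε_i q_{i-2}`. -/
noncomputable def qseq (α : ℝ) : ℕ → ℤ
  | 0 => 1
  | 1 => nicfA α 1
  | i + 2 => nicfA α (i + 2) * qseq α (i + 1) + nicfE α (i + 2) * qseq α i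

/-- `ᾱ_i = q_{i-1}/q_i` (with `ᾱ_0 = 0`). -/
noncomputable def abar (α : ℝ) (i : ℕ) : ℝ :=
  if i = 0 then 0 else (qseq α (i - 1) : ℝ) / (qseq α i : ℝ)

/-- `δ_i = -(-ε_1)(-ε_2)⋯(-ε_{i+1})`. -/
noncomputable def deltaSeq (α : ℝ) (i : ℕ) : ℤ := -∏ j ∈ Finset.Icc 1 (i + 1), (-nicfE α j)

/-- `d_n^- = (Σ_{i=1}^n t_i δ_{i-1} q_{i-1}) / (δ_{n-1} q_n)` for `γ_*` (so `t_i = λ_i`). -/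
noncomputable def dminus (α : ℝ) (n : ℕ) : ℝ :=
  (∑ i ∈ Finset.Icc 1 n, (lamStar α i : ℝ) * (deltaSeq α (i - 1) : ℝ) * (qseq α (i - 1) : ℝ)) /
    ((deltaSeq α (n - 1) : ℝ) * (qseq α n : ℝ))

/-- `d_n^+ = (Σ_{i=n+1}^∞ t_i D_{i-1}) / D_{n-1}` for `γ_*` (so `t_i = λ_i`). -/
noncomputable def dplus (α : ℝ) (n : ℕ) : ℝ :=
  (∑' k : ℕ, (lamStar α (n + 1 + k) : ℝ) * nicfD α (n + 1 + k)) / nicfD α n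

/-- `d_n^-` for `γ_**` (so `t_i = λ'_i`). -/
noncomputable def dminus2 (α : ℝ) (n : ℕ) : ℝ :=
  (∑ i ∈ Finset.Icc 1 n, (lamStar2 α i : ℝ) * (deltaSeq α (i - 1) : ℝ) * (qseq α (i - 1) : ℝ)) /
    ((deltaSeq α (n - 1) : ℝ) * (qseq α n : ℝ))

/-- `d_n^+` for `γ_**` (so `t_i = λ'_i`). -/
noncomputable def dplus2 (α : ℝ) (n : ℕ) : ℝ :=
  (∑' k : ℕ, (lamStar2 α (n + 1 + k) : ℝ) * nicfD α (n + 1 + k)) / nicfD α n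

/-- `i ∈ S(γ_*)`: `|d_i^-| ≤ 1 - ᾱ_i` and `-(1-ε_{i+1}α_i) ≤ d_i^+ ≤ 1+ε_{i+1}α_i`. -/
def inS (α : ℝ) (i : ℕ) : Prop :=
  |dminus α i| ≤ 1 - abar α i ∧
    -(1 - (nicfE α (i + 1) : ℝ) * nicfT α i) ≤ dplus α i ∧
      dplus α i ≤ 1 + (nicfE α (i + 1) : ℝ) * nicfT α i

/-- `i ∈ S(γ_**)`. -/
def inS2 (α : ℝ) (i : ℕ) : Prop :=
  |dminus2 α i| ≤ 1 - abar α i ∧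
    -(1 - (nicfE α (i + 1) : ℝ) * nicfT α i) ≤ dplus2 α i ∧
      dplus2 α i ≤ 1 + (nicfE α (i + 1) : ℝ) * nicfT α i

/-- The remainders `γ_i` of the alpha-expansion of `γ`: `γ_0 = γ`,
`γ_{i+1} = {γ_i/α_i}`. -/
noncomputable def gSeq (α γ : ℝ) : ℕ → ℝ
  | 0 => γ
  | i + 1 => Int.fract (gSeq α γ i / nicfT α i)

/-- The coefficients `c_i` (for `i ≥ 1`) of the alpha-expansion of `γ`:
`c_{i+1} = ⌊γ_i/α_i⌋`. -/
noncomputable def cCoef (α γ : ℝ) (i : ℕ) : ℤ := ⌊gSeq α γ (i - 1) / nicfT α (i - 1)⌋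

/-- Second-order expansion of `z` in `h` with all constants bounded by `B`. -/
def Ap (h B z c0 c1 c2 : ℝ) : Prop :=
  |c0| ≤ B ∧ |c1| ≤ B ∧ |c2| ≤ B ∧ |z - (c0 + c1 * h + c2 * h ^ 2)| ≤ B * h ^ 3

lemma Ap.nonneg {h B z c0 c1 c2 : ℝ} (H : Ap h B z c0 c1 c2) : 0 ≤ B :=
  (abs_nonneg _).trans H.1

lemma Ap.weaken {h B B' z c0 c1 c2 : ℝ} (hh : 0 ≤ h) (H : Ap h B z c0 c1 c2) (hB : B ≤ B') :
    Ap h B' z c0 c1 c2 := by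
  obtain ⟨h0, h1, h2, h3⟩ := H
  refine ⟨h0.trans hB, h1.trans hB, h2.trans hB, h3.trans ?_⟩
  gcongr

lemma Ap.add {h B B' z z' c0 c1 c2 d0 d1 d2 : ℝ}
    (H : Ap h B z c0 c1 c2) (H' : Ap h B' z' d0 d1 d2) :
    Ap h (B + B') (z + z') (c0 + d0) (c1 + d1) (c2 + d2) := by
  obtain ⟨h0, h1, h2, h3⟩ := H
  obtain ⟨k0, k1, k2, k3⟩ := H'
  refine ⟨(abs_add_le _ _).trans (add_le_add h0 k0), (abs_add_le _ _).trans (add_le_add h1 k1),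
    (abs_add_le _ _).trans (add_le_add h2 k2), ?_⟩
  have : z + z' - (c0 + d0 + (c1 + d1) * h + (c2 + d2) * h ^ 2)
    = (z - (c0 + c1 * h + c2 * h ^ 2)) + (z' - (d0 + d1 * h + d2 * h ^ 2)) := by ring
  rw [this, add_mul]
  exact (abs_add_le _ _).trans (add_le_add h3 k3)

lemma Ap.neg {h B z c0 c1 c2 : ℝ} (H : Ap h B z c0 c1 c2) :
    Ap h B (-z) (-c0) (-c1) (-c2) := by
  obtain ⟨h0, h1, h2, h3⟩ := H
  refine ⟨by rwa [abs_neg], by rwa [abs_neg], by rwa [abs_neg], ?_⟩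
  have : -z - (-c0 + -c1 * h + -c2 * h ^ 2) = -(z - (c0 + c1 * h + c2 * h ^ 2)) := by ring
  rwa [this, abs_neg]

lemma Ap.sub {h B B' z z' c0 c1 c2 d0 d1 d2 : ℝ}
    (H : Ap h B z c0 c1 c2) (H' : Ap h B' z' d0 d1 d2) :
    Ap h (B + B') (z - z') (c0 - d0) (c1 - d1) (c2 - d2) := by
  have := H.add H'.neg
  simpa [sub_eq_add_neg] using this

lemma Ap.const {h B c : ℝ} (hh : 0 ≤ h) (hc : |c| ≤ B) : Ap h B c c 0 0 := by
  have hB : 0 ≤ B := (abs_nonneg _).trans hc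
  refine ⟨hc, by simpa, by simpa, ?_⟩
  simp only [zero_mul, add_zero, sub_self, abs_zero]
  positivity

lemma Ap.mul {h B B' z z' c0 c1 c2 d0 d1 d2 : ℝ} (hh : 0 ≤ h) (hh1 : h ≤ 1)
    (H : Ap h B z c0 c1 c2) (H' : Ap h B' z' d0 d1 d2) :
    Ap h (10 * B * B') (z * z') (c0 * d0) (c0 * d1 + c1 * d0) (c0 * d2 + c1 * d1 + c2 * d0) := by
  have hB := H.nonneg
  have hB' := H'.nonneg
  obtain ⟨h0, h1, h2, h3⟩ := H
  obtain ⟨k0, k1, k2, k3⟩ := H'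
  have hBB : 0 ≤ B * B' := by positivity
  have m : ∀ {x y : ℝ}, |x| ≤ B → |y| ≤ B' → |x * y| ≤ B * B' := by
    intro x y hx hy
    rw [abs_mul]
    exact mul_le_mul hx hy (abs_nonneg _) hB
  have m00 := m h0 k0
  have m01 := m h0 k1
  have m02 := m h0 k2
  have m10 := m h1 k0
  have m11 := m h1 k1
  have m12 := m h1 k2
  have m20 := m h2 k0
  have m21 := m h2 k1
  have m22 := m h2 k2
  refine ⟨by linarith, (abs_add_le _ _).trans (by linarith),
    (abs_add_three _ _ _).trans (by linarith), ?_⟩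
  set E := z - (c0 + c1 * h + c2 * h ^ 2) with hE
  set F := z' - (d0 + d1 * h + d2 * h ^ 2) with hF
  have h3' : 0 ≤ h ^ 3 := by positivity
  have hsq : h ^ 2 ≤ 1 := pow_le_one₀ hh hh1
  have hcu : h ^ 3 ≤ 1 := pow_le_one₀ hh hh1
  have bnd : ∀ {C a b c : ℝ}, 0 ≤ C → |a| ≤ C → |b| ≤ C → |c| ≤ C →
      |a + b * h + c * h ^ 2| ≤ 3 * C := by
    intro C a b c hC ha hb hc
    refine (abs_add_three _ _ _).trans ?_
    rw [abs_mul, abs_mul, abs_of_nonneg hh, abs_of_nonneg (by positivity : (0:ℝ) ≤ h ^ 2)]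
    have e1 : |b| * h ≤ C * 1 := mul_le_mul hb hh1 hh hC
    have e2 : |c| * h ^ 2 ≤ C * 1 := mul_le_mul hc hsq (by positivity) hC
    linarith
  have P := bnd hB h0 h1 h2
  have Q := bnd hB' k0 k1 k2
  have key : z * z' - (c0 * d0 + (c0 * d1 + c1 * d0) * h + (c0 * d2 + c1 * d1 + c2 * d0) * h ^ 2)
      = (c1 * d2) * h ^ 3 + (c2 * d1) * h ^ 3 + (c2 * d2) * h * h ^ 3
        + E * (d0 + d1 * h + d2 * h ^ 2) + (c0 + c1 * h + c2 * h ^ 2) * F + E * F := by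
    rw [hE, hF]; ring
  rw [key]
  have t1 : |(c1 * d2) * h ^ 3| ≤ B * B' * h ^ 3 := by
    rw [abs_mul, abs_of_nonneg h3']; gcongr
  have t2 : |(c2 * d1) * h ^ 3| ≤ B * B' * h ^ 3 := by
    rw [abs_mul, abs_of_nonneg h3']; gcongr
  have t3 : |(c2 * d2) * h * h ^ 3| ≤ B * B' * h ^ 3 := by
    rw [abs_mul, abs_mul, abs_of_nonneg h3', abs_of_nonneg hh]
    have : |c2 * d2| * h ≤ B * B' * 1 := mul_le_mul m22 hh1 hh hBB
    rw [mul_one] at this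
    gcongr
  have t4 : |E * (d0 + d1 * h + d2 * h ^ 2)| ≤ 3 * (B * B' * h ^ 3) := by
    rw [abs_mul]
    calc _ ≤ (B * h ^ 3) * (3 * B') := mul_le_mul h3 Q (abs_nonneg _) (by positivity)
      _ = _ := by ring
  have t5 : |(c0 + c1 * h + c2 * h ^ 2) * F| ≤ 3 * (B * B' * h ^ 3) := by
    rw [abs_mul]
    calc _ ≤ (3 * B) * (B' * h ^ 3) := mul_le_mul P k3 (abs_nonneg _) (by positivity)
      _ = _ := by ring
  have t6 : |E * F| ≤ B * B' * h ^ 3 := by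
    rw [abs_mul]
    calc _ ≤ (B * h ^ 3) * (B' * h ^ 3) := mul_le_mul h3 k3 (abs_nonneg _) (by positivity)
      _ = (B * B' * h ^ 3) * h ^ 3 := by ring
      _ ≤ (B * B' * h ^ 3) * 1 := by gcongr
      _ = _ := by ring
  calc _ ≤ |(c1 * d2) * h ^ 3| + |(c2 * d1) * h ^ 3| + |(c2 * d2) * h * h ^ 3|
        + |E * (d0 + d1 * h + d2 * h ^ 2)| + |(c0 + c1 * h + c2 * h ^ 2) * F| + |E * F| := by
        refine (abs_add_le _ _).trans (add_le_add ((abs_add_le _ _).trans (add_le_add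
          ((abs_add_le _ _).trans (add_le_add (abs_add_three _ _ _) le_rfl)) le_rfl)) le_rfl)
    _ ≤ _ := by linarith

/-- Expansion of `1/(R+β+s)`. -/
lemma Ap.inv {h z R β s : ℝ} (hh : 0 < h) (hh1 : h ≤ 1 / 100) (hR : R * h = 1)
    (hβ : β = 0 ∨ β = 1) (hs : |s| ≤ 3 * h) (hz : z * (R + β + s) = 1) :
    Ap h 20 z 0 1 (-β) := by
  have hβ0 : 0 ≤ β ∧ β ≤ 1 := by rcases hβ with rfl | rfl <;> norm_num
  refine ⟨by norm_num, by norm_num, by rw [abs_neg, abs_of_nonneg hβ0.1]; linarith, ?_⟩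
  have hs' := abs_le.1 hs
  set D := 1 + β * h + s * h with hD
  have hD2 : 1 / 2 ≤ D := by
    rw [hD]; nlinarith [mul_nonneg hβ0.1 hh.le]
  have e1 : z * D = h := by
    have : z * D = z * (R + β + s) * h := by rw [hD]; linear_combination (-z) * hR
    rw [this, hz, one_mul]
  have e2 : (z - (0 + 1 * h + -β * h ^ 2)) * D
      = -s * h ^ 2 + β ^ 2 * h ^ 3 + β * s * h ^ 3 := by
    rw [sub_mul, e1, hD]; ring
  have e3 : |(z - (0 + 1 * h + -β * h ^ 2)) * D| ≤ 10 * h ^ 3 := by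
    rw [e2]
    have a1 : |-s * h ^ 2| ≤ 3 * h ^ 3 := by
      rw [abs_mul, abs_neg, abs_of_nonneg (by positivity : (0:ℝ) ≤ h ^ 2)]
      nlinarith [sq_nonneg h]
    have a2 : |β ^ 2 * h ^ 3| ≤ h ^ 3 := by
      rw [abs_of_nonneg (by positivity)]
      have : β ^ 2 ≤ 1 := by nlinarith
      have h3 : 0 ≤ h ^ 3 := by positivity
      nlinarith
    have a3 : |β * s * h ^ 3| ≤ 3 * h ^ 3 := by
      have h3 : 0 ≤ h ^ 3 := by positivity
      rw [abs_mul, abs_mul, abs_of_nonneg h3, abs_of_nonneg hβ0.1]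
      have : β * |s| ≤ 1 * 3 := mul_le_mul hβ0.2 (by linarith) (abs_nonneg _) (by norm_num)
      nlinarith
    have := abs_add_three (-s * h ^ 2) (β ^ 2 * h ^ 3) (β * s * h ^ 3)
    have h3 : 0 ≤ h ^ 3 := by positivity
    linarith
  rw [abs_mul, abs_of_nonneg (by linarith : 0 ≤ D)] at e3
  nlinarith [abs_nonneg (z - (0 + 1 * h + -β * h ^ 2))]

/-- First pass: `z = (u+s)/a` with `s = O(h)`. -/
lemma Ap.first {h z ai u s β : ℝ} (hh : 0 < h) (hh1 : h ≤ 1 / 100) (hai : Ap h 20 ai 0 1 (-β))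
    (hs : |s| ≤ 40 * h) (hu : |u| ≤ 20) (hz : z = (u + s) * ai) :
    Ap h 1000 z 0 u ((z - u * h) / h ^ 2) := by
  obtain ⟨-, -, h2, h3⟩ := hai
  rw [abs_neg] at h2
  have b1 : |ai - h| ≤ 21 * h ^ 2 := by
    have : ai - h = (ai - (0 + 1 * h + -β * h ^ 2)) + (-β * h ^ 2) := by ring
    rw [this]
    refine (abs_add_le _ _).trans ?_
    rw [abs_mul, abs_neg, abs_of_nonneg (by positivity : (0:ℝ) ≤ h ^ 2)]
    nlinarith [sq_nonneg h, mul_nonneg (sq_nonneg h) hh.le]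
  have b2 : |ai| ≤ 2 * h := by
    have : ai = (ai - h) + h := by ring
    rw [this]
    refine (abs_add_le _ _).trans ?_
    rw [abs_of_pos hh]
    nlinarith
  have b3 : |z - u * h| ≤ 1000 * h ^ 2 := by
    have : z - u * h = u * (ai - h) + s * ai := by rw [hz]; ring
    rw [this]
    refine (abs_add_le _ _).trans ?_
    rw [abs_mul, abs_mul]
    have c1 : |u| * |ai - h| ≤ 20 * (21 * h ^ 2) :=
      mul_le_mul hu b1 (abs_nonneg _) (by norm_num)
    have c2 : |s| * |ai| ≤ (40 * h) * (2 * h) :=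
      mul_le_mul hs b2 (abs_nonneg _) (by positivity)
    nlinarith [sq_nonneg h]
  have hp : (0:ℝ) < h ^ 2 := by positivity
  refine ⟨by norm_num, by linarith, ?_, ?_⟩
  · rw [abs_div, abs_of_pos hp, div_le_iff₀ hp]; exact b3
  · have : z - (0 + u * h + (z - u * h) / h ^ 2 * h ^ 2) = 0 := by
      field_simp; ring
    rw [this, abs_zero]; positivity

/-- Expansion of the vertex product. -/
lemma vexp {h ab th p q u w x y t x1 y1 σ τ : ℝ} (hh : 0 < h) (hh1 : h ≤ 1 / 100)
    (hab : Ap h 20 ab 0 1 x1) (hth : Ap h 20 th 0 t y1)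
    (hp : Ap h 1000000 p 0 u x) (hq : Ap h 1000000 q 0 w y)
    (hσ : |σ| ≤ 1) (hτ : |τ| ≤ 1) :
    Ap h (10 ^ 30) ((1 + σ * p - ab * (σ * τ + σ * q)) * (1 + τ * q - th * (σ * τ + τ * p)))
      1 (σ * u - σ * τ + τ * w - t * σ * τ)
      ((σ * u - σ * τ) * (τ * w - t * σ * τ) + (σ * x - σ * w - σ * τ * x1)
        + (τ * y - t * τ * u - σ * τ * y1)) := by
  have h0 := hh.le
  have h1 : h ≤ 1 := by linarith
  have one : Ap h 1 1 1 0 0 := Ap.const h0 (by norm_num)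
  have s : Ap h 1 σ σ 0 0 := Ap.const h0 hσ
  have t' : Ap h 1 τ τ 0 0 := Ap.const h0 hτ
  have st := s.mul h0 h1 t'
  have sp := s.mul h0 h1 hp
  have sq := s.mul h0 h1 hq
  have tp := t'.mul h0 h1 hp
  have tq := t'.mul h0 h1 hq
  have A := (one.add sp).sub (hab.mul h0 h1 (st.add sq))
  have B := (one.add tq).sub (hth.mul h0 h1 (st.add tp))
  have C := (A.mul h0 h1 B).weaken (B' := 10 ^ 30) h0 (by norm_num)
  convert C using 1 <;> ring

/-- Second pass for the coordinates. -/
lemma second {h bi β u q r c d z w v : ℝ} (hh : 0 < h) (hh1 : h ≤ 1 / 100)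
    (hb : Ap h 20 bi 0 1 (-β)) (hu : |u| ≤ 20)
    (hq : Ap h 1000 q 0 w c) (hr : Ap h 1000 r 0 v d) (hz : z = (u + q + r) * bi) :
    Ap h 1000000 z 0 u (w + v - β * u) := by
  have h0 := hh.le
  have h1 : h ≤ 1 := by linarith
  have cu : Ap h 20 u u 0 0 := Ap.const h0 hu
  have C := (((cu.add hq).add hr).mul h0 h1 hb).weaken (B' := 1000000) h0 (by norm_num)
  rw [hz]
  convert C using 1 <;> ring

/-- Lexicographic positivity. -/
lemma int_lex {h : ℝ} {m n : ℤ} (hh : 0 < h) (H : 0 < (m : ℝ) * h + n * h ^ 2)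
    (hn : |(n : ℝ)| * h < 1) : 0 ≤ m ∧ (m = 0 → 1 ≤ n) := by
  have hn' := abs_lt.1 (by rwa [← abs_of_pos hh, ← abs_mul] at hn : |(n:ℝ) * h| < 1)
  have H' : 0 < (m : ℝ) + n * h := by
    have : (m : ℝ) * h + n * h ^ 2 = h * (m + n * h) := by ring
    rw [this] at H
    exact (mul_pos_iff_of_pos_left hh).1 H
  constructor
  · have : (-1 : ℝ) < m := by linarith
    have : (-1 : ℤ) < m := by exact_mod_cast this
    omega
  · rintro rfl
    have : (0 : ℝ) < n * h := by simpa using H'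
    have : (0 : ℝ) < n := by
      by_contra hc
      push Not at hc
      nlinarith
    have : (0 : ℤ) < n := by exact_mod_cast this
    omega

/-- A chain of bases of the lattice `{(n, nα-m)}` produced by a continued fraction. -/
structure Ch (α : ℝ) (a e q p : ℕ → ℤ) : Prop where
  hq : ∀ j, q (j + 2) = a j * q (j + 1) + e j * q j
  hp : ∀ j, p (j + 2) = a j * p (j + 1) + e j * p j
  det : ∀ j, (q (j + 1) * p j - q j * p (j + 1)) ^ 2 = 1
  q0 : 0 ≤ q 0
  qlt : ∀ j, q j < q (j + 1)
  ynz : ∀ j, (q j : ℝ) * α - p j ≠ 0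
  yle : ∀ j, |(q (j + 1) : ℝ) * α - p (j + 1)| ≤ |(q j : ℝ) * α - p j| / 2
  he : ∀ j, e j = 1 ∨ e j = -1

/-- Second coordinate of the basis vectors. -/
def yy (α : ℝ) (q p : ℕ → ℤ) (j : ℕ) : ℝ := (q j : ℝ) * α - p j

/-- Ratio of denominators. -/
noncomputable def ab (q : ℕ → ℤ) (j : ℕ) : ℝ := (q j : ℝ) / q (j + 1)

/-- Signed ratio of the second coordinates. -/
noncomputable def th (α : ℝ) (q p : ℕ → ℤ) (j : ℕ) : ℝ := yy α q p (j + 1) / yy α q p j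

/-- The linear functional `det(v_j, ·)`. -/
def LL (α : ℝ) (q p : ℕ → ℤ) (x y : ℝ) (j : ℕ) : ℝ := (q j : ℝ) * y - x * yy α q p j

namespace Ch
variable {α : ℝ} {a e q p : ℕ → ℤ}

lemma qnn (H : Ch α a e q p) (j : ℕ) : 0 ≤ q j := by
  induction j with
  | zero => exact H.q0
  | succ k ih => exact ih.trans (H.qlt k).le

lemma qpos (H : Ch α a e q p) (j : ℕ) : 0 < q (j + 1) := lt_of_le_of_lt (H.qnn j) (H.qlt j)

lemma qposR (H : Ch α a e q p) (j : ℕ) : (0 : ℝ) < q (j + 1) := by exact_mod_cast H.qpos j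

lemma qnnR (H : Ch α a e q p) (j : ℕ) : (0 : ℝ) ≤ q j := by exact_mod_cast H.qnn j

lemma ab_nonneg (H : Ch α a e q p) (j : ℕ) : 0 ≤ ab q j := div_nonneg (H.qnnR j) (H.qposR j).le

lemma ab_lt (H : Ch α a e q p) (j : ℕ) : ab q j < 1 := by
  unfold ab
  rw [div_lt_one (H.qposR j)]
  exact_mod_cast H.qlt j

lemma yynz (H : Ch α a e q p) (j : ℕ) : yy α q p j ≠ 0 := H.ynz j

lemma yyle (H : Ch α a e q p) (j : ℕ) : |yy α q p (j + 1)| ≤ |yy α q p j| / 2 := H.yle j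

lemma th_le (H : Ch α a e q p) (j : ℕ) : |th α q p j| ≤ 1 / 2 := by
  unfold th
  rw [abs_div, div_le_iff₀ (abs_pos.2 (H.yynz j))]
  linarith [H.yyle j]

lemma ab_mul (H : Ch α a e q p) (j : ℕ) : ab q j * q (j + 1) = q j := by
  unfold ab; exact div_mul_cancel₀ _ (H.qposR j).ne'

lemma th_mul (H : Ch α a e q p) (j : ℕ) : th α q p j * yy α q p j = yy α q p (j + 1) := by
  unfold th; exact div_mul_cancel₀ _ (H.yynz j)

lemma abth (H : Ch α a e q p) (j : ℕ) : |ab q j * th α q p j| ≤ 1 / 2 := by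
  rw [abs_mul, abs_of_nonneg (H.ab_nonneg j)]
  nlinarith [H.ab_nonneg j, H.ab_lt j, H.th_le j, abs_nonneg (th α q p j)]

lemma one_sub_pos (H : Ch α a e q p) (j : ℕ) : 1 / 2 ≤ 1 - ab q j * th α q p j := by
  have := (abs_le.1 (H.abth j)).2
  linarith

lemma one_sub_le (H : Ch α a e q p) (j : ℕ) : 1 - ab q j * th α q p j ≤ 3 / 2 := by
  have := (abs_le.1 (H.abth j)).1
  linarith

lemma kap (H : Ch α a e q p) (j : ℕ) :
    ((q (j + 1) : ℝ) * yy α q p j - q j * yy α q p (j + 1)) ^ 2 = 1 := by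
  have h : (((q (j + 1) * p j - q j * p (j + 1)) ^ 2 : ℤ) : ℝ) = ((1 : ℤ) : ℝ) := by rw [H.det j]
  push_cast at h
  unfold yy
  rw [← h]; ring

lemma kap' (H : Ch α a e q p) (j : ℕ) :
    (q (j + 1) : ℝ) * |yy α q p j| * (1 - ab q j * th α q p j) = 1 := by
  have h := H.kap j
  rw [← H.th_mul j, ← H.ab_mul j] at h
  have e1 : (q (j + 1) : ℝ) * yy α q p j
      - ab q j * q (j + 1) * (th α q p j * yy α q p j)
      = (q (j + 1) : ℝ) * yy α q p j * (1 - ab q j * th α q p j) := by ring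
  rw [e1] at h
  have h2 : |(q (j + 1) : ℝ) * yy α q p j * (1 - ab q j * th α q p j)| = 1 := by
    rw [← sq_eq_sq₀ (abs_nonneg _) zero_le_one, sq_abs, h]; norm_num
  rw [abs_mul, abs_mul, abs_of_pos (H.qposR j),
    abs_of_pos (by linarith [H.one_sub_pos j] : 0 < 1 - ab q j * th α q p j)] at h2
  exact h2

lemma xeq (H : Ch α a e q p) (x y : ℝ) (j : ℕ) :
    |x| = |(LL α q p x y j) * q (j + 1) - (LL α q p x y (j + 1)) * q j| := by
  rw [← sq_eq_sq₀ (abs_nonneg _) (abs_nonneg _), sq_abs, sq_abs]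
  have := H.kap j
  unfold LL
  linear_combination (-x ^ 2) * this

lemma yeq (H : Ch α a e q p) (x y : ℝ) (j : ℕ) :
    |y| = |(LL α q p x y (j + 1)) * yy α q p j - (LL α q p x y j) * yy α q p (j + 1)| := by
  rw [← sq_eq_sq₀ (abs_nonneg _) (abs_nonneg _), sq_abs, sq_abs]
  have := H.kap j
  unfold LL
  linear_combination (-y ^ 2) * this

lemma prod (H : Ch α a e q p) (x y : ℝ) (j : ℕ) :
    |x| * |y| * (1 - ab q j * th α q p j) =
      |(LL α q p x y j - ab q j * LL α q p x y (j + 1)) *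
        (LL α q p x y (j + 1) - th α q p j * LL α q p x y j)| := by
  rw [H.xeq x y j, H.yeq x y j]
  have e1 : (LL α q p x y j) * q (j + 1) - (LL α q p x y (j + 1)) * q j
      = q (j + 1) * (LL α q p x y j - ab q j * LL α q p x y (j + 1)) := by
    rw [← H.ab_mul j]; ring
  have e2 : (LL α q p x y (j + 1)) * yy α q p j - (LL α q p x y j) * yy α q p (j + 1)
      = yy α q p j * (LL α q p x y (j + 1) - th α q p j * LL α q p x y j) := by
    rw [← H.th_mul j]; ring
  rw [e1, e2, abs_mul, abs_mul, abs_mul, abs_of_pos (H.qposR j)]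
  linear_combination |LL α q p x y j - ab q j * LL α q p x y (j + 1)| *
    |LL α q p x y (j + 1) - th α q p j * LL α q p x y j| * H.kap' j

lemma ab_rec (H : Ch α a e q p) (j : ℕ) : ab q (j + 1) * (a j + e j * ab q j) = 1 := by
  have h : ((q (j + 2) : ℤ) : ℝ) = a j * q (j + 1) + e j * q j := by
    rw [H.hq j]; push_cast; ring
  have hp := H.qposR j
  have hp2 := H.qposR (j + 1)
  have h2 : (a j + e j * ab q j) * q (j + 1) = q (j + 2) := by
    rw [h, ← H.ab_mul j]; ring
  have h3 : ab q (j + 1) * q (j + 2) = q (j + 1) := H.ab_mul (j + 1)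
  have h4 : (ab q (j + 1) * (a j + e j * ab q j)) * q (j + 1) = 1 * q (j + 1) := by
    rw [mul_assoc, h2, h3, one_mul]
  exact mul_right_cancel₀ hp.ne' h4

lemma yrec (H : Ch α a e q p) (j : ℕ) :
    yy α q p (j + 2) = a j * yy α q p (j + 1) + e j * yy α q p j := by
  unfold yy
  rw [H.hq j, H.hp j]; push_cast; ring

lemma LLrec (H : Ch α a e q p) (x y : ℝ) (j : ℕ) :
    LL α q p x y (j + 2) = a j * LL α q p x y (j + 1) + e j * LL α q p x y j := by
  unfold LL
  rw [H.yrec j, H.hq j]; push_cast; ring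

lemma th_rec (H : Ch α a e q p) (j : ℕ) : th α q p j * (a j - th α q p (j + 1)) = -e j := by
  have h := H.yrec j
  have h1 : th α q p (j + 1) * yy α q p (j + 1) = yy α q p (j + 2) := H.th_mul (j + 1)
  have h2 := H.th_mul j
  have h3 : (th α q p j * (a j - th α q p (j + 1))) * yy α q p j = (-e j) * yy α q p j := by
    rw [← h1] at h
    linear_combination (a j - th α q p (j + 1)) * h2 - h
  exact mul_right_cancel₀ (H.yynz j) h3

lemma vert (H : Ch α a e q p) (x0 y0 : ℝ) (j : ℕ) (k l : ℤ) : ∃ n m : ℤ,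
    LL α q p (n + x0) (n * α - m + y0) j = LL α q p x0 y0 j + k ∧
    LL α q p (n + x0) (n * α - m + y0) (j + 1) = LL α q p x0 y0 (j + 1) + l := by
  set d := q (j + 1) * p j - q j * p (j + 1) with hd
  have hdd := H.det j
  refine ⟨d * (k * q (j + 1) - l * q j), d * (k * p (j + 1) - l * p j), ?_, ?_⟩
  · have : ((d ^ 2 : ℤ) : ℝ) = ((1 : ℤ) : ℝ) := by rw [← hdd]
    rw [hd] at this ⊢
    push_cast at this ⊢
    unfold LL yy
    linear_combination (k : ℝ) * this
  · have : ((d ^ 2 : ℤ) : ℝ) = ((1 : ℤ) : ℝ) := by rw [← hdd]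
    rw [hd] at this ⊢
    push_cast at this ⊢
    unfold LL yy
    linear_combination (l : ℝ) * this

lemma LLint (x0 y0 : ℝ) (j : ℕ) (n m : ℤ) :
    ∃ k : ℤ, LL α q p (n + x0) (n * α - m + y0) j = LL α q p x0 y0 j + k := by
  refine ⟨n * p j - m * q j, ?_⟩
  unfold LL yy
  push_cast; ring

lemma ylim (H : Ch α a e q p) {ε : ℝ} (hε : 0 < ε) : ∃ J, ∀ j ≥ J, |yy α q p j| < ε := by
  have h1 : ∀ j, |yy α q p j| ≤ |yy α q p 0| * (1 / 2) ^ j := by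
    intro j
    induction j with
    | zero => simp
    | succ k ih => rw [pow_succ]; linarith [H.yyle k]
  have h2 : Tendsto (fun j : ℕ => |yy α q p 0| * (1 / 2 : ℝ) ^ j) atTop (nhds (|yy α q p 0| * 0)) :=
    (tendsto_pow_atTop_nhds_zero_of_lt_one (by norm_num) (by norm_num)).const_mul _
  rw [mul_zero] at h2
  obtain ⟨J, hJ⟩ := eventually_atTop.1 (h2.eventually (gt_mem_nhds hε))
  exact ⟨J, fun j hj => (h1 j).trans_lt (hJ j hj)⟩

/-- Expansion of `ab`. -/
lemma ab_small (H : Ch α a e q p) {R : ℝ} {h : ℝ} {b : ℕ → ℤ} (hh : 0 < h) (hh1 : h ≤ 1 / 100)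
    (hR : R * h = 1) (ha : ∀ j, (a j : ℝ) = R + b j) (hb : ∀ j, b j = 0 ∨ b j = 1) (j : ℕ) :
    ab q (j + 1) ≤ 2 * h := by
  have h1 := H.ab_rec j
  have hb0 : (0 : ℝ) ≤ b j := by rcases hb j with h | h <;> simp [h]
  have he : -1 ≤ e j * ab q j := by
    rcases H.he j with h | h <;> rw [h] <;> push_cast <;> linarith [H.ab_nonneg j, H.ab_lt j]
  rw [ha] at h1
  have hR2 : 100 ≤ R := by
    by_contra hc
    push Not at hc
    nlinarith
  have h3 : ab q (j + 1) * (R - 1) ≤ 1 := by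
    nlinarith [H.ab_nonneg (j + 1)]
  have h4 : ab q (j + 1) * (1 - h) ≤ h := by nlinarith
  nlinarith [H.ab_nonneg (j + 1)]

lemma th_small (H : Ch α a e q p) {R : ℝ} {h : ℝ} {b : ℕ → ℤ} (hh : 0 < h) (hh1 : h ≤ 1 / 100)
    (hR : R * h = 1) (ha : ∀ j, (a j : ℝ) = R + b j) (hb : ∀ j, b j = 0 ∨ b j = 1) (j : ℕ) :
    |th α q p j| ≤ 2 * h := by
  have h1 := H.th_rec j
  have hb0 : (0 : ℝ) ≤ b j := by rcases hb j with h | h <;> simp [h]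
  have hR2 : 100 ≤ R := by
    by_contra hc
    push Not at hc
    nlinarith
  have ht := abs_le.1 (H.th_le (j + 1))
  have h2 : |th α q p j| * (R + b j - th α q p (j + 1)) = 1 := by
    have : |th α q p j * (a j - th α q p (j + 1))| = 1 := by
      rw [h1]
      rcases H.he j with h | h <;> rw [h] <;> norm_num
    rw [abs_mul, ha, abs_of_nonneg (by linarith : 0 ≤ R + b j - th α q p (j + 1))] at this
    exact this
  have h3 : |th α q p j| * (R - 1) ≤ 1 := by
    nlinarith [abs_nonneg (th α q p j)]
  have h4 : |th α q p j| * (1 - h) ≤ h := by nlinarith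
  nlinarith [abs_nonneg (th α q p j)]

lemma ab_ap (H : Ch α a e q p) {R : ℝ} {h : ℝ} {b : ℕ → ℤ} (hh : 0 < h) (hh1 : h ≤ 1 / 100)
    (hR : R * h = 1) (ha : ∀ j, (a j : ℝ) = R + b j) (hb : ∀ j, b j = 0 ∨ b j = 1) (j : ℕ) :
    Ap h 20 (ab q (j + 2)) 0 1 (-b (j + 1)) := by
  have h1 := H.ab_rec (j + 1)
  rw [ha] at h1
  refine Ap.inv hh hh1 hR ?_ ?_ h1
  · rcases hb (j + 1) with h | h <;> simp [h]
  · have h2 := H.ab_small hh hh1 hR ha hb j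
    have h3 := H.ab_nonneg (j + 1)
    rw [abs_mul, abs_of_nonneg h3]
    have : |(e (j + 1) : ℝ)| = 1 := by
      rcases H.he (j + 1) with h | h <;> rw [h] <;> norm_num
    rw [this]; linarith

lemma th_ap (H : Ch α a e q p) {R : ℝ} {h : ℝ} {b : ℕ → ℤ} (hh : 0 < h) (hh1 : h ≤ 1 / 100)
    (hR : R * h = 1) (ha : ∀ j, (a j : ℝ) = R + b j) (hb : ∀ j, b j = 0 ∨ b j = 1) (j : ℕ) :
    Ap h 20 (th α q p j) 0 (-e j) (e j * b j) := by
  have h1 := H.th_rec j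
  rw [ha] at h1
  have h2 := H.th_small hh hh1 hR ha hb (j + 1)
  have hb' : (b j : ℝ) = 0 ∨ (b j : ℝ) = 1 := by rcases hb j with h | h <;> simp [h]
  have hs : |-th α q p (j + 1)| ≤ 3 * h := by rw [abs_neg]; linarith
  rcases H.he j with he | he
  · rw [he] at h1 ⊢
    have := (Ap.inv (z := -th α q p j) hh hh1 hR hb' hs (by push_cast at h1; linarith)).neg
    simpa using this
  · rw [he] at h1 ⊢
    have := (Ap.inv (z := th α q p j) hh hh1 hR hb' hs (by push_cast at h1; linarith))
    simpa using this

end Ch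

/-- Normalised vertex product. -/
def Vx (ab th p q σ τ : ℝ) : ℝ :=
  (1 + σ * p - ab * (σ * τ + σ * q)) * (1 + τ * q - th * (σ * τ + τ * p))

lemma Vx_abs {ab th p q σ τ : ℝ} (hσ : σ = 1 ∨ σ = -1) (hτ : τ = 1 ∨ τ = -1) :
    |((σ + p) / 2 - ab * ((τ + q) / 2)) * ((τ + q) / 2 - th * ((σ + p) / 2))|
      = |Vx ab th p q σ τ| / 4 := by
  have : ((σ + p) / 2 - ab * ((τ + q) / 2)) * ((τ + q) / 2 - th * ((σ + p) / 2))
      = σ * τ * (Vx ab th p q σ τ / 4) := by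
    unfold Vx
    rcases hσ with rfl | rfl <;> rcases hτ with rfl | rfl <;> ring
  rw [this, abs_mul, abs_div]
  have : |σ * τ| = 1 := by
    rcases hσ with rfl | rfl <;> rcases hτ with rfl | rfl <;> norm_num
  rw [this]; norm_num

/-- The sequence of offsets. -/
structure Sol (h R : ℝ) (b e T : ℕ → ℤ) (P : ℕ → ℝ) : Prop where
  hrec : ∀ j, (R + b j) * P (j + 1) = T j + P (j + 2) - e j * P j
  small : ∀ j, |P j| ≤ 20 * h
  hT : ∀ j, |(T j : ℝ)| ≤ 20

lemma inv_ap {h R : ℝ} {b : ℕ → ℤ} (hh : 0 < h) (hh1 : h ≤ 1 / 100)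
    (hR : R * h = 1) (hb : ∀ j, b j = 0 ∨ b j = 1) (j : ℕ) :
    0 < R + b j ∧ Ap h 20 (R + b j)⁻¹ 0 1 (-b j) := by
  have hR0 : 0 < R := by
    by_contra hc
    push Not at hc
    nlinarith
  have hb0 : (0 : ℝ) ≤ b j := by rcases hb j with h | h <;> simp [h]
  have hp : 0 < R + b j := by linarith
  refine ⟨hp, Ap.inv (s := 0) hh hh1 hR ?_ (by simpa using hh.le) ?_⟩
  · rcases hb j with h | h <;> simp [h]
  · rw [add_zero]; exact inv_mul_cancel₀ hp.ne'

lemma Sol.eq {h R : ℝ} {b e T : ℕ → ℤ} {P : ℕ → ℝ} (S : Sol h R b e T P) (hh : 0 < h)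
    (hh1 : h ≤ 1 / 100) (hR : R * h = 1) (hb : ∀ j, b j = 0 ∨ b j = 1) (j : ℕ) :
    P (j + 1) = (T j + P (j + 2) + (-e j * P j)) * (R + b j)⁻¹ := by
  have hp := (inv_ap hh hh1 hR hb j).1
  rw [eq_mul_inv_iff_mul_eq₀ hp.ne']
  linarith [S.hrec j]

lemma Sol.first {h R : ℝ} {b e T : ℕ → ℤ} {P : ℕ → ℝ} (S : Sol h R b e T P) (hh : 0 < h)
    (hh1 : h ≤ 1 / 100) (hR : R * h = 1) (hb : ∀ j, b j = 0 ∨ b j = 1)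
    (he : ∀ j, e j = 1 ∨ e j = -1) (j : ℕ) :
    Ap h 1000 (P (j + 1)) 0 (T j) ((P (j + 1) - T j * h) / h ^ 2) := by
  have h1 := S.eq hh hh1 hR hb j
  rw [add_assoc] at h1
  refine Ap.first hh hh1 (inv_ap hh hh1 hR hb j).2 ?_ (S.hT j) h1
  refine (abs_add_le _ _).trans ?_
  have : |(-e j : ℝ)| = 1 := by
    rcases he j with h | h <;> rw [h] <;> norm_num
  rw [abs_mul, this]
  linarith [S.small j, S.small (j + 2)]

section
variable {α h R : ℝ} {a b e q p T : ℕ → ℤ} {P : ℕ → ℝ}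

lemma lev_plus (H : Ch α a e q p) (S : Sol h R b e T P) (hh : 0 < h)
    (hh1 : h ≤ 1 / 100) (hR : R * h = 1) (ha : ∀ j, (a j : ℝ) = R + b j)
    (hb : ∀ j, b j = 0 ∨ b j = 1) (j : ℕ) (hej : e (j + 2) = 1) {σ τ : ℤ}
    (hσ : σ = 1 ∨ σ = -1) (hτ : τ = 1 ∨ τ = -1) :
    ∃ c2, Ap h (10 ^ 30) (Vx (ab q (j + 2)) (th α q p (j + 2)) (P (j + 2)) (P (j + 3)) σ τ)
      1 ((σ * T (j + 1) + τ * T (j + 2) : ℤ) : ℝ) c2 := by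
  have h1 := H.ab_ap hh hh1 hR ha hb j
  have h2 := H.th_ap hh hh1 hR ha hb (j + 2)
  have h3 := (S.first hh hh1 hR hb H.he (j + 1)).weaken (B' := 1000000) hh.le (by norm_num)
  have h4 := (S.first hh hh1 hR hb H.he (j + 2)).weaken (B' := 1000000) hh.le (by norm_num)
  have hs : |(σ : ℝ)| ≤ 1 := by rcases hσ with rfl | rfl <;> norm_num
  have ht : |(τ : ℝ)| ≤ 1 := by rcases hτ with rfl | rfl <;> norm_num
  have h5 := vexp hh hh1 h1 h2 h3 h4 hs ht
  have hm : (σ * T (j + 1) - σ * τ + τ * T (j + 2) - -(e (j + 2)) * σ * τ : ℝ)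
      = ((σ * T (j + 1) + τ * T (j + 2) : ℤ) : ℝ) := by
    rw [hej]; push_cast; ring
  have h6 := h5
  refine ⟨_, h5.1, ?_, h5.2.2.1, ?_⟩
  · refine le_trans (le_of_eq ?_) h5.2.1
    congr 1
    rw [hej]; push_cast; ring
  · refine le_trans (le_of_eq ?_) h5.2.2.2
    unfold Vx
    congr 3
    rw [hej]; push_cast; ring

lemma lev_minus (H : Ch α a e q p) (S : Sol h R b e T P) (hh : 0 < h)
    (hh1 : h ≤ 1 / 100) (hR : R * h = 1) (ha : ∀ j, (a j : ℝ) = R + b j)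
    (hb : ∀ j, b j = 0 ∨ b j = 1) (j : ℕ) (hej1 : e (j + 1) = 1) (hej : e (j + 2) = -1) {σ τ : ℤ}
    (hσ : σ = 1 ∨ σ = -1) (hτ : τ = 1 ∨ τ = -1) :
    Ap h (10 ^ 30) (Vx (ab q (j + 2)) (th α q p (j + 2)) (P (j + 2)) (P (j + 3)) σ τ)
      1 ((σ * T (j + 1) + τ * T (j + 2) - 2 * σ * τ : ℤ) : ℝ)
      (((σ * T (j + 1) - σ * τ) * (τ * T (j + 2) - σ * τ) - σ * T j + τ * T (j + 3)
        - b (j + 1) * (σ * T (j + 1) - σ * τ) - b (j + 2) * (τ * T (j + 2) - σ * τ) : ℤ) : ℝ) := by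
  have h1 := H.ab_ap hh hh1 hR ha hb j
  have h2 := H.th_ap hh hh1 hR ha hb (j + 2)
  have f0 := S.first hh hh1 hR hb H.he j
  have f1 := S.first hh hh1 hR hb H.he (j + 1)
  have f2 := S.first hh hh1 hR hb H.he (j + 2)
  have f3 := S.first hh hh1 hR hb H.he (j + 3)
  have e1 := S.eq hh hh1 hR hb (j + 1)
  have e2 := S.eq hh hh1 hR hb (j + 2)
  rw [hej1] at e1
  rw [hej] at e2
  have g0 := f0.neg
  rw [neg_zero] at g0
  have h3 := second (z := P (j + 2)) (q := P (j + 3)) (r := -P (j + 1)) hh hh1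
    (inv_ap hh hh1 hR hb (j + 1)).2 (S.hT (j + 1)) f2 g0
    (e1.trans (by push_cast; ring_nf))
  have h4 := second (z := P (j + 3)) (q := P (j + 4)) (r := P (j + 2)) hh hh1
    (inv_ap hh hh1 hR hb (j + 2)).2 (S.hT (j + 2)) f3 f1
    (e2.trans (by push_cast; ring_nf))
  have hs : |(σ : ℝ)| ≤ 1 := by rcases hσ with rfl | rfl <;> norm_num
  have ht : |(τ : ℝ)| ≤ 1 := by rcases hτ with rfl | rfl <;> norm_num
  have h5 := vexp hh hh1 h1 h2 h3 h4 hs ht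
  unfold Vx
  convert h5 using 1
  · rw [hej]; push_cast; ring
  · rw [hej]; push_cast; ring

end

lemma N_ap {h ab th x1 t y1 c : ℝ} (hh : 0 < h) (hh1 : h ≤ 1 / 100)
    (hab : Ap h 20 ab 0 1 x1) (hth : Ap h 20 th 0 t y1) (hc : |c| ≤ 6) :
    Ap h (10 ^ 6) ((1 - 3 * h + c * h ^ 2) * (1 - ab * th)) 1 (-3) (c - t) := by
  have h0 := hh.le
  have h1 : h ≤ 1 := by linarith
  have one : Ap h 1 1 1 0 0 := Ap.const h0 (by norm_num)
  have A := one.sub (hab.mul h0 h1 hth)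
  have B : Ap h 6 (1 - 3 * h + c * h ^ 2) 1 (-3) c := by
    refine ⟨by norm_num, by rw [abs_neg]; norm_num, hc, ?_⟩
    have : 1 - 3 * h + c * h ^ 2 - (1 + -3 * h + c * h ^ 2) = 0 := by ring
    rw [this, abs_zero]; positivity
  have C := (B.mul h0 h1 A).weaken (B' := 10 ^ 6) h0 (by norm_num)
  convert C using 1 <;> ring

lemma cmp_up {h V ab th x1 t y1 c m n : ℝ} (hh : 0 < h) (hh1 : h ≤ 1 / 100)
    (hab : Ap h 20 ab 0 1 x1) (hth : Ap h 20 th 0 t y1) (hc : |c| ≤ 6)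
    (hN : 1 / 2 ≤ 1 - ab * th) (hV : Ap h (10 ^ 30) V 1 m n)
    (H : (1 - 3 * h + c * h ^ 2 + 10 ^ 32 * h ^ 3) * (1 - ab * th) ≤ V) :
    0 < (m + 3) * h + (n - c + t) * h ^ 2 := by
  have A := (N_ap hh hh1 hab hth hc).2.2.2
  have B := hV.2.2.2
  have A' := abs_le.1 A
  have B' := abs_le.1 B
  have h3 : 0 < h ^ 3 := by positivity
  have : 10 ^ 32 * h ^ 3 * (1 / 2) ≤ 10 ^ 32 * h ^ 3 * (1 - ab * th) := by gcongr
  nlinarith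

lemma cmp_low {h V ab th x1 t y1 c m n : ℝ} (hh : 0 < h) (hh1 : h ≤ 1 / 100)
    (hab : Ap h 20 ab 0 1 x1) (hth : Ap h 20 th 0 t y1) (hc : |c| ≤ 6)
    (hN : 1 / 2 ≤ 1 - ab * th) (hV : Ap h (10 ^ 30) V 1 m n)
    (H : 0 ≤ (m + 3) * h + (n - c + t) * h ^ 2) :
    (1 - 3 * h + c * h ^ 2 - 10 ^ 32 * h ^ 3) * (1 - ab * th) ≤ V := by
  have A := (N_ap hh hh1 hab hth hc).2.2.2
  have B := hV.2.2.2
  have A' := abs_le.1 A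
  have B' := abs_le.1 B
  have h3 : 0 < h ^ 3 := by positivity
  have : 10 ^ 32 * h ^ 3 * (1 / 2) ≤ 10 ^ 32 * h ^ 3 * (1 - ab * th) := by gcongr
  nlinarith

lemma V_pos {h V m n : ℝ} (hh : 0 < h) (hh1 : h ≤ 1 / 10 ^ 40) (hV : Ap h (10 ^ 30) V 1 m n) :
    0 < V := by
  obtain ⟨-, h1, h2, h3⟩ := hV
  have h3' := abs_le.1 h3
  have h1' := abs_le.1 h1
  have h2' := abs_le.1 h2
  have hs : h ^ 2 ≤ h := by nlinarith
  have hc : h ^ 3 ≤ h := by nlinarith [sq_nonneg h]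
  have m1 : -(10 ^ 30 * h) ≤ m * h := by nlinarith
  have m2 : -(10 ^ 30 * h) ≤ n * h ^ 2 := by nlinarith [sq_nonneg h]
  have m3 : 10 ^ 30 * h ^ 3 ≤ 10 ^ 30 * h := by nlinarith
  have m4 : 10 ^ 40 * h ≤ 1 := by
    rw [le_div_iff₀ (by positivity)] at hh1; linarith
  linarith

lemma nint_le (x : ℝ) (m : ℤ) : nint x ≤ |x - m| := round_le x m

lemma nint_pos {x : ℝ} (hx : ∀ m : ℤ, x ≠ m) : 0 < nint x := by
  unfold nint
  exact abs_pos.2 (sub_ne_zero.2 (hx _))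

/-- Shifting a chain. -/
lemma Ch.shift {α : ℝ} {a e q p : ℕ → ℤ} (H : Ch α a e q p) (s : ℕ) :
    Ch α (fun j => a (s + j)) (fun j => e (s + j)) (fun j => q (s + j)) (fun j => p (s + j)) where
  hq j := H.hq (s + j)
  hp j := H.hp (s + j)
  det j := H.det (s + j)
  q0 := H.qnn _
  qlt j := H.qlt (s + j)
  ynz j := H.ynz (s + j)
  yle j := H.yle (s + j)
  he j := H.he (s + j)

/-- Existence of vertices. -/
lemma Ch.vertex {α : ℝ} {a e q p : ℕ → ℤ} (H : Ch α a e q p) {x0 y0 P Q : ℝ} {j : ℕ} {k l : ℤ}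
    (hP : LL α q p x0 y0 j = (1 + P) / 2 + k) (hQ : LL α q p x0 y0 (j + 1) = (1 + Q) / 2 + l)
    (hP1 : |P| ≤ 1) (hQ1 : |Q| ≤ 1) {σ τ : ℤ} (hσ : σ = 1 ∨ σ = -1) (hτ : τ = 1 ∨ τ = -1) :
    ∃ n m : ℤ, |n + x0| * |n * α - m + y0| * (1 - ab q j * th α q p j) =
      |Vx (ab q j) (th α q p j) P Q σ τ| / 4 ∧ |n * α - m + y0| ≤ 2 * |yy α q p j| := by
  have hs : ∃ s : ℤ, (1 + 2 * (s : ℝ)) = σ := by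
    rcases hσ with rfl | rfl
    · exact ⟨0, by norm_num⟩
    · exact ⟨-1, by norm_num⟩
  have ht : ∃ s : ℤ, (1 + 2 * (s : ℝ)) = τ := by
    rcases hτ with rfl | rfl
    · exact ⟨0, by norm_num⟩
    · exact ⟨-1, by norm_num⟩
  obtain ⟨s, hs⟩ := hs
  obtain ⟨t, ht⟩ := ht
  obtain ⟨n, m, h1, h2⟩ := H.vert x0 y0 j (s - k) (t - l)
  have h1' : LL α q p (n + x0) (n * α - m + y0) j = (σ + P) / 2 := by
    rw [h1, hP, ← hs]; push_cast; ring
  have h2' : LL α q p (n + x0) (n * α - m + y0) (j + 1) = (τ + Q) / 2 := by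
    rw [h2, hQ, ← ht]; push_cast; ring
  have hσ' : (σ : ℝ) = 1 ∨ (σ : ℝ) = -1 := by rcases hσ with rfl | rfl <;> norm_num
  have hτ' : (τ : ℝ) = 1 ∨ (τ : ℝ) = -1 := by rcases hτ with rfl | rfl <;> norm_num
  refine ⟨n, m, ?_, ?_⟩
  · rw [H.prod, h1', h2', Vx_abs hσ' hτ']
  · rw [H.yeq _ _ j, h1', h2']
    have b1 : |(σ + P) / 2| ≤ 1 := by
      have := abs_le.1 hP1
      rw [abs_le]
      rcases hσ' with h | h <;> rw [h] <;> constructor <;> linarith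
    have b2 : |(τ + Q) / 2| ≤ 1 := by
      have := abs_le.1 hQ1
      rw [abs_le]
      rcases hτ' with h | h <;> rw [h] <;> constructor <;> linarith
    refine (abs_sub _ _).trans ?_
    rw [abs_mul, abs_mul]
    have := H.yyle j
    nlinarith [abs_nonneg (yy α q p j), abs_nonneg (yy α q p (j + 1))]

/-- The offset at level `j`. -/
noncomputable def Pf (α : ℝ) (q p : ℕ → ℤ) (γ : ℝ) (j : ℕ) : ℝ :=
  2 * Int.fract (LL α q p 0 (-γ) j) - 1

lemma Pf_abs (α : ℝ) (q p : ℕ → ℤ) (γ : ℝ) (j : ℕ) : |Pf α q p γ j| ≤ 1 := by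
  unfold Pf
  have h1 := Int.fract_nonneg (LL α q p 0 (-γ) j)
  have h2 := Int.fract_lt_one (LL α q p 0 (-γ) j)
  rw [abs_le]; constructor <;> linarith

lemma Pf_eq (α : ℝ) (q p : ℕ → ℤ) (γ : ℝ) (j : ℕ) :
    LL α q p 0 (-γ) j = (1 + Pf α q p γ j) / 2 + (⌊LL α q p 0 (-γ) j⌋ : ℤ) := by
  unfold Pf
  have := Int.fract_add_floor (LL α q p 0 (-γ) j)
  linarith

lemma up_vert {α : ℝ} {a e q p : ℕ → ℤ} (H : Ch α a e q p) {γ m' : ℝ}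
    (hγ : ¬∃ p q : ℤ, γ = (p : ℝ) + (q : ℝ) * α)
    (hm : ∀ᶠ n : ℤ in cofinite, m' < (|n| : ℝ) * nint (n * α - γ)) :
    ∃ J, ∀ j ≥ J, ∀ σ τ : ℤ, σ = 1 ∨ σ = -1 → τ = 1 ∨ τ = -1 →
      m' * (1 - ab q j * th α q p j) ≤
        |Vx (ab q j) (th α q p j) (Pf α q p γ j) (Pf α q p γ (j + 1)) σ τ| / 4 := by
  have hF : {n : ℤ | ¬ m' < (|n| : ℝ) * nint (n * α - γ)}.Finite := hm
  have hpos : ∀ n : ℤ, 0 < nint (n * α - γ) := by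
    intro n
    refine nint_pos fun m hm => hγ ⟨-m, n, ?_⟩
    push_cast; linarith
  have hd : ∀ᶠ δ in nhdsWithin (0 : ℝ) (Set.Ioi 0),
      ∀ n ∈ {n : ℤ | ¬ m' < (|n| : ℝ) * nint (n * α - γ)}, δ < nint (n * α - γ) := by
    rw [eventually_all_finite hF]
    intro n _
    exact eventually_nhdsWithin_of_eventually_nhds (eventually_lt_nhds (hpos n))
  obtain ⟨δ, hδ, hδ0⟩ := (hd.and self_mem_nhdsWithin).exists
  have hδ0 : 0 < δ := hδ0
  obtain ⟨J, hJ⟩ := H.ylim (ε := δ / 2) (by positivity)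
  refine ⟨J, fun j hj σ τ hσ hτ => ?_⟩
  obtain ⟨n, m, h1, h2⟩ := H.vertex (Pf_eq α q p γ j) (Pf_eq α q p γ (j + 1))
    (Pf_abs _ _ _ _ _) (Pf_abs _ _ _ _ _) hσ hτ
  rw [← h1]
  have h3 := H.one_sub_pos j
  refine mul_le_mul_of_nonneg_right ?_ (by linarith)
  have h4 : nint (n * α - γ) ≤ |n * α - m + -γ| := by
    refine (nint_le _ m).trans (le_of_eq ?_)
    congr 1; ring
  have h5 : nint (n * α - γ) < δ := by
    have := hJ j hj
    linarith
  have h6 : m' < (|n| : ℝ) * nint (n * α - γ) := by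
    by_contra hc
    exact absurd (hδ n hc) (not_lt.2 h5.le)
  rw [add_zero]
  refine h6.le.trans ?_
  gcongr

/-- Signs opposite to the offsets. -/
lemma opp_sign (x : ℝ) : ∃ σ : ℤ, (σ = 1 ∨ σ = -1) ∧ σ * x = -|x| := by
  rcases le_total 0 x with h | h
  · exact ⟨-1, Or.inr rfl, by rw [abs_of_nonneg h]; push_cast; ring⟩
  · exact ⟨1, Or.inl rfl, by rw [abs_of_nonpos h]; push_cast; ring⟩

lemma Vx_opp {ab th p q A B : ℝ} {σ τ : ℤ} (hσ : σ = 1 ∨ σ = -1) (hτ : τ = 1 ∨ τ = -1)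
    (h1 : σ * p = -|p|) (h2 : τ * q = -|q|) (hp : |p| ≤ 1) (hq : |q| ≤ 1)
    (hab : |ab| ≤ A) (hth : |th| ≤ B) :
    |Vx ab th p q σ τ| ≤ (1 - |p| + A) * (1 - |q| + B) := by
  unfold Vx
  have e1 : (σ : ℝ) * τ + σ * q = σ * τ * (1 - |q|) := by
    have : (τ : ℝ) * τ = 1 := by rcases hτ with rfl | rfl <;> norm_num
    linear_combination (-(σ : ℝ) * q) * this + σ * τ * h2
  have e2 : (σ : ℝ) * τ + τ * p = σ * τ * (1 - |p|) := by
    have : (σ : ℝ) * σ = 1 := by rcases hσ with rfl | rfl <;> norm_num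
    linear_combination (-(τ : ℝ) * p) * this + σ * τ * h1
  have hst : |(σ : ℝ) * τ| = 1 := by
    rcases hσ with rfl | rfl <;> rcases hτ with rfl | rfl <;> norm_num
  rw [abs_mul, e1, e2, h1, h2]
  have hA : 0 ≤ A := (abs_nonneg _).trans hab
  have hB : 0 ≤ B := (abs_nonneg _).trans hth
  have := abs_nonneg p
  have := abs_nonneg q
  apply mul_le_mul _ _ (abs_nonneg _) (by linarith)
  · refine (abs_sub _ _).trans ?_
    rw [abs_mul, abs_mul, hst, abs_of_nonneg (by linarith : 0 ≤ 1 - |q|),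
      abs_of_nonneg (by linarith : 0 ≤ 1 + -|p|)]
    nlinarith
  · refine (abs_sub _ _).trans ?_
    rw [abs_mul, abs_mul, hst, abs_of_nonneg (by linarith : 0 ≤ 1 - |p|),
      abs_of_nonneg (by linarith : 0 ≤ 1 + -|q|)]
    nlinarith

lemma up_triv {α : ℝ} {a e q p : ℕ → ℤ} (H : Ch α a e q p) {γ : ℝ}
    (hγ : ¬∃ p q : ℤ, γ = (p : ℝ) + (q : ℝ) * α) :
    ¬ ∀ᶠ n : ℤ in cofinite, (2 : ℝ) < (|n| : ℝ) * nint (n * α - γ) := by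
  intro hm
  obtain ⟨J, hJ⟩ := up_vert H hγ hm
  obtain ⟨σ, hσ, h1⟩ := opp_sign (Pf α q p γ J)
  obtain ⟨τ, hτ, h2⟩ := opp_sign (Pf α q p γ (J + 1))
  have h3 := hJ J le_rfl σ τ hσ hτ
  have p1 := Pf_abs α q p γ J
  have p2 := Pf_abs α q p γ (J + 1)
  have h4 := Vx_opp (A := 1) (B := 1 / 2) hσ hτ h1 h2 p1 p2
    (by rw [abs_of_nonneg (H.ab_nonneg J)]; exact (H.ab_lt J).le)
    (H.th_le J)
  have h5 := H.one_sub_pos J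
  have h6 := abs_nonneg (Pf α q p γ J)
  have h7 := abs_nonneg (Pf α q p γ (J + 1))
  nlinarith

/-- Integer condition at a minus level. -/
def MC (c b1 b2 s u w v : ℤ) : Prop := ∀ σ τ : ℤ, σ = 1 ∨ σ = -1 → τ = 1 ∨ τ = -1 →
  -3 ≤ σ * u + τ * w - 2 * σ * τ ∧ (σ * u + τ * w - 2 * σ * τ = -3 →
    c ≤ (σ * u - σ * τ) * (τ * w - σ * τ) - σ * s + τ * v - b1 * (σ * u - σ * τ)
      - b2 * (τ * w - σ * τ))

/-- Integer condition at a plus level. -/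
def PC (u w : ℤ) : Prop := ∀ σ τ : ℤ, σ = 1 ∨ σ = -1 → τ = 1 ∨ τ = -1 → -3 ≤ σ * u + τ * w

lemma MC.all {c b1 b2 s u w v : ℤ} (H : MC c b1 b2 s u w v) :
    (-3 ≤ u + w - 2 ∧ (u + w - 2 = -3 →
      c ≤ (u - 1) * (w - 1) - s + v - b1 * (u - 1) - b2 * (w - 1))) ∧
    (-3 ≤ u - w + 2 ∧ (u - w + 2 = -3 →
      c ≤ (u + 1) * (- w + 1) - s - v - b1 * (u + 1) - b2 * (- w + 1))) ∧
    (-3 ≤ -u + w + 2 ∧ (-u + w + 2 = -3 →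
      c ≤ (-u + 1) * (w + 1) + s + v - b1 * (-u + 1) - b2 * (w + 1))) ∧
    (-3 ≤ -u - w - 2 ∧ (-u - w - 2 = -3 →
      c ≤ (-u - 1) * (-w - 1) + s - v - b1 * (-u - 1) - b2 * (-w - 1))) := by
  have h1 := H 1 1 (Or.inl rfl) (Or.inl rfl)
  have h2 := H 1 (-1) (Or.inl rfl) (Or.inr rfl)
  have h3 := H (-1) 1 (Or.inr rfl) (Or.inl rfl)
  have h4 := H (-1) (-1) (Or.inr rfl) (Or.inr rfl)
  refine ⟨⟨by linarith [h1.1], fun h => ?_⟩, ⟨by linarith [h2.1], fun h => ?_⟩,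
    ⟨by linarith [h3.1], fun h => ?_⟩, ⟨by linarith [h4.1], fun h => ?_⟩⟩
  · linarith [h1.2 (by linarith)]
  · linarith [h2.2 (by linarith)]
  · linarith [h3.2 (by linarith)]
  · linarith [h4.2 (by linarith)]

lemma PC.odd {u w : ℤ} (H : PC u w) (hu : u % 2 = 1) (hw : w % 2 = 1) :
    (u = 1 ∨ u = -1) ∧ (w = 1 ∨ w = -1) := by
  have h1 := H 1 1 (Or.inl rfl) (Or.inl rfl)
  have h2 := H 1 (-1) (Or.inl rfl) (Or.inr rfl)
  have h3 := H (-1) 1 (Or.inr rfl) (Or.inl rfl)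
  have h4 := H (-1) (-1) (Or.inr rfl) (Or.inr rfl)
  omega

lemma PC.even {u w : ℤ} (H : PC u w) (hu : u % 2 = 0) (hw : w % 2 = 0) :
    (u = 0 ∧ w = 0) ∨ (u = 0 ∧ w = 2) ∨ (u = 0 ∧ w = -2) ∨ (u = 2 ∧ w = 0) ∨ (u = -2 ∧ w = 0) := by
  have h1 := H 1 1 (Or.inl rfl) (Or.inl rfl)
  have h2 := H 1 (-1) (Or.inl rfl) (Or.inr rfl)
  have h3 := H (-1) 1 (Or.inr rfl) (Or.inl rfl)
  have h4 := H (-1) (-1) (Or.inr rfl) (Or.inr rfl)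
  omega

lemma even_step {s1 s2 u1 u2 w1 w2 : ℤ} (hs1 : s1 = 1 ∨ s1 = -1) (hs2 : s2 = 1 ∨ s2 = -1)
    (hw1 : w1 = 1 ∨ w1 = -1) (hw2 : w2 = 1 ∨ w2 = -1)
    (hu : (u1 = 0 ∧ u2 = 0) ∨ (u1 = 0 ∧ u2 = 2) ∨ (u1 = 0 ∧ u2 = -2) ∨ (u1 = 2 ∧ u2 = 0) ∨
      (u1 = -2 ∧ u2 = 0))
    (h1 : MC 4 1 0 s1 s2 u1 u2) (h2 : MC 4 0 1 u1 u2 w1 w2) : s1 = s2 ∧ w1 = - w2 := by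
  have k1 := h1.all
  have k2 := h2.all
  clear h1 h2
  rcases hu with ⟨rfl, rfl⟩ | ⟨rfl, rfl⟩ | ⟨rfl, rfl⟩ | ⟨rfl, rfl⟩ | ⟨rfl, rfl⟩ <;>
  rcases hs1 with rfl | rfl <;> rcases hs2 with rfl | rfl <;>
  rcases hw1 with rfl | rfl <;> rcases hw2 with rfl | rfl <;>
  first
  | exact ⟨rfl, rfl⟩
  | (exfalso; revert k1 k2; norm_num)

lemma odd_step {s1 s2 u1 u2 w1 w2 : ℤ} (hs1 : s1 = 1 ∨ s1 = -1) (hs2 : s2 = 1 ∨ s2 = -1)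
    (hw1 : w1 = 1 ∨ w1 = -1) (hw2 : w2 = 1 ∨ w2 = -1)
    (hu : (u1 = 0 ∧ u2 = 0) ∨ (u1 = 0 ∧ u2 = 2) ∨ (u1 = 0 ∧ u2 = -2) ∨ (u1 = 2 ∧ u2 = 0) ∨
      (u1 = -2 ∧ u2 = 0))
    (h1 : MC 5 0 1 s1 s2 u1 u2) (h2 : MC 5 1 0 u1 u2 w1 w2) : False := by
  have k1 := h1.all
  have k2 := h2.all
  clear h1 h2
  rcases hu with ⟨rfl, rfl⟩ | ⟨rfl, rfl⟩ | ⟨rfl, rfl⟩ | ⟨rfl, rfl⟩ | ⟨rfl, rfl⟩ <;>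
  rcases hs1 with rfl | rfl <;> rcases hs2 with rfl | rfl <;>
  rcases hw1 with rfl | rfl <;> rcases hw2 with rfl | rfl <;>
  (revert k1 k2; norm_num)

/-- The periodic pattern. -/
structure Per (b e : ℕ → ℤ) : Prop where
  b0 : ∀ k, b (4 * k) = 0
  b1 : ∀ k, b (4 * k + 1) = 0
  b2 : ∀ k, b (4 * k + 2) = 1
  b3 : ∀ k, b (4 * k + 3) = 1
  e0 : ∀ k, e (4 * k) = -1
  e1 : ∀ k, e (4 * k + 1) = 1
  e2 : ∀ k, e (4 * k + 2) = -1
  e3 : ∀ k, e (4 * k + 3) = 1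

lemma Per.hb {b e : ℕ → ℤ} (H : Per b e) (j : ℕ) : b j = 0 ∨ b j = 1 := by
  have h := Nat.div_add_mod j 4
  have h4 := Nat.mod_lt j (show 4 > 0 by norm_num)
  have h0 := H.b0 (j / 4)
  have h1 := H.b1 (j / 4)
  have h2 := H.b2 (j / 4)
  have h3 := H.b3 (j / 4)
  interval_cases hj : j % 4
  · rw [← h]; exact Or.inl h0
  · rw [← h]; exact Or.inl h1
  · rw [← h]; exact Or.inr h2
  · rw [← h]; exact Or.inr h3

lemma Per.shift {b e : ℕ → ℤ} (H : Per b e) (s : ℕ) :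
    Per (fun j => b (4 * s + j)) (fun j => e (4 * s + j)) where
  b0 k := by rw [← H.b0 (s + k)]; congr 1; ring
  b1 k := by rw [← H.b1 (s + k)]; congr 1; ring
  b2 k := by rw [← H.b2 (s + k)]; congr 1; ring
  b3 k := by rw [← H.b3 (s + k)]; congr 1; ring
  e0 k := by rw [← H.e0 (s + k)]; congr 1; ring
  e1 k := by rw [← H.e1 (s + k)]; congr 1; ring
  e2 k := by rw [← H.e2 (s + k)]; congr 1; ring
  e3 k := by rw [← H.e3 (s + k)]; congr 1; ring

lemma crude {h p q ab th : ℝ} {σ τ : ℤ} (hh : 0 < h) (hh1 : h ≤ 1 / 100)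
    (hσ : σ = 1 ∨ σ = -1) (hτ : τ = 1 ∨ τ = -1)
    (h1 : σ * p = -|p|) (h2 : τ * q = -|q|) (hp : |p| ≤ 1) (hq : |q| ≤ 1)
    (hab : |ab| ≤ 2 * h) (hth : |th| ≤ 2 * h)
    (H : (1 - 4 * h) * (1 - ab * th) ≤ |Vx ab th p q σ τ|) : |p| ≤ 16 * h ∧ |q| ≤ 16 * h := by
  have h3 := Vx_opp hσ hτ h1 h2 hp hq hab hth
  have h4 : |ab * th| ≤ 2 * h * (2 * h) := by
    rw [abs_mul]; gcongr
  have h5 := (abs_le.1 h4).2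
  have h6 := abs_nonneg p
  have h7 := abs_nonneg q
  have h8 : (1 - 4 * h) * (1 - 2 * h * (2 * h)) ≤ (1 - 4 * h) * (1 - ab * th) := by
    apply mul_le_mul_of_nonneg_left <;> linarith
  have h9 : 1 - 8 * h ≤ (1 - |p| + 2 * h) * (1 - |q| + 2 * h) := by
    have : 1 - 8 * h ≤ (1 - 4 * h) * (1 - 2 * h * (2 * h)) := by nlinarith [mul_pos hh hh]
    linarith
  constructor
  · by_contra hc
    push Not at hc
    have : (1 - |p| + 2 * h) * (1 - |q| + 2 * h) ≤ (1 - 14 * h) * (1 + 2 * h) := by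
      apply mul_le_mul <;> nlinarith
    nlinarith
  · by_contra hc
    push Not at hc
    have : (1 - |p| + 2 * h) * (1 - |q| + 2 * h) ≤ (1 + 2 * h) * (1 - 14 * h) := by
      apply mul_le_mul <;> nlinarith
    nlinarith

lemma pos_of_lex {h m n : ℝ} {k : ℤ} (hm : m = k) (hh : 0 < h) (hh1 : h ≤ 1 / 10 ^ 50)
    (hn : |n| ≤ 2 * 10 ^ 30)
    (H : 0 < (m + 3) * h + n * h ^ 2) : -3 ≤ k := by
  have H' : 0 < (m + 3) + n * h := by
    have : (m + 3) * h + n * h ^ 2 = h * ((m + 3) + n * h) := by ring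
    rw [this] at H
    exact (mul_pos_iff_of_pos_left hh).1 H
  have h1 : |n * h| < 1 := by
    rw [abs_mul, abs_of_pos hh]
    calc |n| * h ≤ 2 * 10 ^ 30 * (1 / 10 ^ 50) := by gcongr
      _ < 1 := by norm_num
  have h2 := (abs_lt.1 h1).2
  rw [hm] at H'
  have : (-4 : ℝ) < k := by linarith
  have : (-4 : ℤ) < k := by exact_mod_cast this
  omega

lemma par1 {r : ℤ} (h : r % 2 = 0) : (r + 1) % 2 = 1 := by omega

lemma par0 {r : ℤ} (h : r % 2 = 1) : (r + 1) % 2 = 0 := by omega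

lemma int_end {Ri c t2 t3 t4 t5 t6 t7 t8 t9 t10 t11 : ℤ}
    (hc : (Ri % 2 = 0 ∧ c = 4) ∨ (Ri % 2 = 1 ∧ c = 5))
    (q2 : t2 % 2 = (Ri + 1) % 2) (q3 : t3 % 2 = (Ri + 1) % 2)
    (q4 : t4 % 2 = Ri % 2) (q5 : t5 % 2 = Ri % 2)
    (q6 : t6 % 2 = (Ri + 1) % 2) (q7 : t7 % 2 = (Ri + 1) % 2)
    (q8 : t8 % 2 = Ri % 2) (q9 : t9 % 2 = Ri % 2)
    (q10 : t10 % 2 = (Ri + 1) % 2) (q11 : t11 % 2 = (Ri + 1) % 2)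
    (pc3 : PC t2 t3) (pc5 : PC t4 t5) (pc7 : PC t6 t7) (pc9 : PC t8 t9) (pc11 : PC t10 t11)
    (mc4 : MC c 1 0 t2 t3 t4 t5) (mc6 : MC c 0 1 t4 t5 t6 t7)
    (mc8 : MC c 1 0 t6 t7 t8 t9) (mc10 : MC c 0 1 t8 t9 t10 t11) : False := by
  rcases hc with ⟨hr, rfl⟩ | ⟨hr, rfl⟩
  · have r1 := par1 hr
    have x3 := pc3.odd (q2.trans r1) (q3.trans r1)
    have x5 := pc5.even (q4.trans hr) (q5.trans hr)
    have x7 := pc7.odd (q6.trans r1) (q7.trans r1)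
    have x9 := pc9.even (q8.trans hr) (q9.trans hr)
    have x11 := pc11.odd (q10.trans r1) (q11.trans r1)
    have y1 := (even_step x3.1 x3.2 x7.1 x7.2 x5 mc4 mc6).2
    have y2 := (even_step x7.1 x7.2 x11.1 x11.2 x9 mc8 mc10).1
    have y3 := x7.1
    clear x3 x5 x7 x9 x11 q2 q3 q4 q5 q6 q7 q8 q9 q10 q11
    omega
  · have r1 := par0 hr
    have x5 := pc5.odd (q4.trans hr) (q5.trans hr)
    have x7 := pc7.even (q6.trans r1) (q7.trans r1)
    have x9 := pc9.odd (q8.trans hr) (q9.trans hr)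
    exact odd_step x5.1 x5.2 x9.1 x9.2 x7 mc6 mc8

section
variable {α h R γ : ℝ} {a b e q p T : ℕ → ℤ} {P : ℕ → ℝ} {c : ℤ}

lemma up_PC (H : Ch α a e q p) (S : Sol h R b e T P) (hh : 0 < h)
    (hh1 : h ≤ 1 / 10 ^ 50) (hR : R * h = 1) (ha : ∀ j, (a j : ℝ) = R + b j)
    (hb : ∀ j, b j = 0 ∨ b j = 1) (hc : |(c : ℝ)| ≤ 6)
    (hV : ∀ j, ∀ σ τ : ℤ, σ = 1 ∨ σ = -1 → τ = 1 ∨ τ = -1 →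
      (1 - 3 * h + c * h ^ 2 + 10 ^ 32 * h ^ 3) * (1 - ab q j * th α q p j) ≤
        |Vx (ab q j) (th α q p j) (P j) (P (j + 1)) σ τ|)
    (j : ℕ) (hej : e (j + 2) = 1) : PC (T (j + 1)) (T (j + 2)) := by
  intro σ τ hσ hτ
  have hh2 : h ≤ 1 / 100 := hh1.trans (by norm_num)
  obtain ⟨c2, hap⟩ := lev_plus H S hh hh2 hR ha hb j hej hσ hτ
  have hp := V_pos hh (hh1.trans (by norm_num)) hap
  have h1 := hV (j + 2) σ τ hσ hτ
  have : (P (j + 2 + 1)) = P (j + 3) := rfl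
  rw [this, abs_of_pos hp] at h1
  have h2 := cmp_up hh hh2 (H.ab_ap hh hh2 hR ha hb j) (H.th_ap hh hh2 hR ha hb (j + 2)) hc
    (H.one_sub_pos _) hap h1
  refine pos_of_lex rfl hh hh1 ?_ h2
  have h3 := abs_le.1 hap.2.2.1
  have h4 := abs_le.1 hc
  rw [hej, abs_le]
  push_cast
  constructor <;> linarith

lemma up_MC (H : Ch α a e q p) (S : Sol h R b e T P) (hh : 0 < h)
    (hh1 : h ≤ 1 / 10 ^ 50) (hR : R * h = 1) (ha : ∀ j, (a j : ℝ) = R + b j)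
    (hb : ∀ j, b j = 0 ∨ b j = 1) (hc : |(c : ℝ)| ≤ 6)
    (hV : ∀ j, ∀ σ τ : ℤ, σ = 1 ∨ σ = -1 → τ = 1 ∨ τ = -1 →
      (1 - 3 * h + c * h ^ 2 + 10 ^ 32 * h ^ 3) * (1 - ab q j * th α q p j) ≤
        |Vx (ab q j) (th α q p j) (P j) (P (j + 1)) σ τ|)
    (j : ℕ) (hej1 : e (j + 1) = 1) (hej : e (j + 2) = -1) :
    MC c (b (j + 1)) (b (j + 2)) (T j) (T (j + 1)) (T (j + 2)) (T (j + 3)) := by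
  intro σ τ hσ hτ
  have hh2 : h ≤ 1 / 100 := hh1.trans (by norm_num)
  have hap := lev_minus H S hh hh2 hR ha hb j hej1 hej hσ hτ
  have hp := V_pos hh (hh1.trans (by norm_num)) hap
  have h1 := hV (j + 2) σ τ hσ hτ
  have : (P (j + 2 + 1)) = P (j + 3) := rfl
  rw [this, abs_of_pos hp] at h1
  have h2 := cmp_up hh hh2 (H.ab_ap hh hh2 hR ha hb j) (H.th_ap hh hh2 hR ha hb (j + 2)) hc
    (H.one_sub_pos _) hap h1
  have h3 := abs_le.1 hap.2.2.1
  set m : ℤ := σ * T (j + 1) + τ * T (j + 2) - 2 * σ * τ with hm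
  set n : ℤ := (σ * T (j + 1) - σ * τ) * (τ * T (j + 2) - σ * τ) - σ * T j + τ * T (j + 3)
        - b (j + 1) * (σ * T (j + 1) - σ * τ) - b (j + 2) * (τ * T (j + 2) - σ * τ) with hn
  have h4 : 0 < ((m + 3 : ℤ) : ℝ) * h + ((n - c + 1 : ℤ) : ℝ) * h ^ 2 := by
    rw [hej] at h2
    push_cast at h2 ⊢
    linarith
  have hc' := abs_le.1 hc
  have h5 := int_lex hh h4 (by
    have : |((n - c + 1 : ℤ) : ℝ)| ≤ 2 * 10 ^ 30 := by
      rw [abs_le]; push_cast; constructor <;> linarith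
    calc _ ≤ 2 * 10 ^ 30 * (1 / 10 ^ 50) := by gcongr
      _ < (1 : ℝ) := by norm_num)
  exact ⟨by linarith [h5.1], fun h => by linarith [h5.2 (by linarith)]⟩

set_option maxHeartbeats 1000000 in
lemma up_core (H : Ch α a e q p) (hper : Per b e) (hh : 0 < h)
    (hh1 : h ≤ 1 / 10 ^ 50) (hR : R * h = 1) (ha : ∀ j, (a j : ℝ) = R + b j) {Ri : ℤ}
    (hRi : R = Ri) (hc : (Ri % 2 = 0 ∧ c = 4) ∨ (Ri % 2 = 1 ∧ c = 5))
    (hV : ∀ j, ∀ σ τ : ℤ, σ = 1 ∨ σ = -1 → τ = 1 ∨ τ = -1 →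
      (1 - 3 * h + c * h ^ 2 + 10 ^ 32 * h ^ 3) * (1 - ab q (j + 1) * th α q p (j + 1)) ≤
        |Vx (ab q (j + 1)) (th α q p (j + 1)) (Pf α q p γ (j + 1)) (Pf α q p γ (j + 2)) σ τ|) :
    False := by
  have hh2 : h ≤ 1 / 100 := hh1.trans (by norm_num)
  have hb := hper.hb
  -- shift by four so that the small bounds hold
  have hsmall : ∀ j, |Pf α q p γ (j + 1)| ≤ 16 * h := by
    intro j
    obtain ⟨σ, hσ, h1⟩ := opp_sign (Pf α q p γ (j + 1))
    obtain ⟨τ, hτ, h2⟩ := opp_sign (Pf α q p γ (j + 2))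
    refine (crude hh hh2 hσ hτ h1 h2 (Pf_abs _ _ _ _ _) (Pf_abs _ _ _ _ _)
      (by rw [abs_of_nonneg (H.ab_nonneg _)]; exact H.ab_small hh hh2 hR ha hb j)
      (H.th_small hh hh2 hR ha hb (j + 1)) (le_trans ?_ (hV j σ τ hσ hτ))).1
    have := H.one_sub_pos (j + 1)
    refine mul_le_mul_of_nonneg_right ?_ (by linarith)
    have : (0 : ℝ) ≤ c := by rcases hc with ⟨-, rfl⟩ | ⟨-, rfl⟩ <;> norm_num
    have : (0 : ℝ) ≤ c * h ^ 2 := by positivity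
    have : (0 : ℝ) ≤ 10 ^ 32 * h ^ 3 := by positivity
    linarith
  set P : ℕ → ℝ := fun j => Pf α q p γ (4 * 1 + j) with hP
  set k : ℕ → ℤ := fun j => ⌊LL α q p 0 (-γ) j⌋ with hk
  set T : ℕ → ℤ := fun j => -2 * (a (4 * 1 + j) * k (4 * 1 + j + 1) + e (4 * 1 + j) * k (4 * 1 + j)
    - k (4 * 1 + j + 2)) + 1 - a (4 * 1 + j) - e (4 * 1 + j) with hT
  have hPs : ∀ j, |P j| ≤ 16 * h := by
    intro j
    have := hsmall (3 + j)
    have e1 : 3 + j + 1 = 4 * 1 + j := by ring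
    rw [e1] at this
    exact this
  have hrec : ∀ j, (R + b (4 * 1 + j)) * P (j + 1) = T j + P (j + 2) - e (4 * 1 + j) * P j := by
    intro j
    have h1 := Pf_eq α q p γ (4 * 1 + j)
    have h2 := Pf_eq α q p γ (4 * 1 + j + 1)
    have h3 := Pf_eq α q p γ (4 * 1 + j + 2)
    have h4 := H.LLrec 0 (-γ) (4 * 1 + j)
    have p1 : P (j + 1) = Pf α q p γ (4 * 1 + j + 1) := rfl
    have p2 : P (j + 2) = Pf α q p γ (4 * 1 + j + 2) := rfl
    rw [← ha, p1, p2]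
    simp only [hT, hP, hk]
    push_cast
    linear_combination -2 * h4 + 2 * h3 - 2 * (a (4 * 1 + j) : ℝ) * h2 - 2 * (e (4 * 1 + j) : ℝ) * h1
  have hTb : ∀ j, |(T j : ℝ)| ≤ 20 := by
    intro j
    have h1 : (T j : ℝ) = (R + b (4 * 1 + j)) * P (j + 1) + (-P (j + 2) + e (4 * 1 + j) * P j) := by
      linarith [hrec j]
    have h2 : |R + (b (4 * 1 + j) : ℝ)| ≤ R + 1 := by
      have hR0 : 0 < R := (inv_ap hh hh2 hR hb 0).1.trans_le (by rw [hper.b0 0]; simp)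
      rcases hb (4 * 1 + j) with h | h <;> rw [h] <;> push_cast <;> rw [abs_of_nonneg] <;> linarith
    have h3 : |(e (4 * 1 + j) : ℝ)| = 1 := by
      rcases H.he (4 * 1 + j) with h | h <;> rw [h] <;> norm_num
    have hR0 : 0 ≤ R + 1 := (abs_nonneg _).trans h2
    rw [h1]
    refine (abs_add_le _ _).trans ?_
    have h4 : |(R + (b (4 * 1 + j) : ℝ)) * P (j + 1)| ≤ (R + 1) * (16 * h) := by
      rw [abs_mul]
      exact mul_le_mul h2 (hPs _) (abs_nonneg _) hR0
    have h5 : |-P (j + 2) + e (4 * 1 + j) * P j| ≤ 16 * h + 16 * h := by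
      refine (abs_add_le _ _).trans ?_
      rw [abs_mul, h3, abs_neg, one_mul]
      exact add_le_add (hPs _) (hPs _)
    nlinarith
  have S : Sol h R (fun j => b (4 * 1 + j)) (fun j => e (4 * 1 + j)) T P :=
    ⟨hrec, fun j => (hPs j).trans (by linarith), hTb⟩
  have H' := H.shift (4 * 1)
  have hper' := hper.shift 1
  have hc6 : |(c : ℝ)| ≤ 6 := by rcases hc with ⟨-, rfl⟩ | ⟨-, rfl⟩ <;> norm_num
  have hV' : ∀ j, ∀ σ τ : ℤ, σ = 1 ∨ σ = -1 → τ = 1 ∨ τ = -1 →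
      (1 - 3 * h + c * h ^ 2 + 10 ^ 32 * h ^ 3) *
        (1 - ab (fun j => q (4 * 1 + j)) j * th α (fun j => q (4 * 1 + j))
          (fun j => p (4 * 1 + j)) j) ≤
        |Vx (ab (fun j => q (4 * 1 + j)) j) (th α (fun j => q (4 * 1 + j))
          (fun j => p (4 * 1 + j)) j) (P j) (P (j + 1)) σ τ| := by
    intro j σ τ hσ hτ
    have := hV (3 + j) σ τ hσ hτ
    have e1 : 3 + j + 1 = 4 * 1 + j := by ring
    have e2 : 3 + j + 2 = 4 * 1 + j + 1 := by ring
    rw [e1, e2] at this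
    exact this
  have ha' : ∀ j, ((fun j => a (4 * 1 + j)) j : ℝ) = R + (fun j => b (4 * 1 + j)) j :=
    fun j => ha (4 * 1 + j)
  have hpc := up_PC H' S hh hh1 hR ha' hper'.hb hc6 hV'
  have hmc := up_MC H' S hh hh1 hR ha' hper'.hb hc6 hV'
  have pc3 := hpc 1 (hper'.e3 0)
  have pc5 := hpc 3 (hper'.e1 1)
  have pc7 := hpc 5 (hper'.e3 1)
  have pc9 := hpc 7 (hper'.e1 2)
  have pc11 := hpc 9 (hper'.e3 2)
  have mc4 := hmc 2 (hper'.e3 0) (hper'.e0 1)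
  have mc6 := hmc 4 (hper'.e1 1) (hper'.e2 1)
  have mc8 := hmc 6 (hper'.e3 1) (hper'.e0 2)
  have mc10 := hmc 8 (hper'.e1 2) (hper'.e2 2)
  rw [hper'.b3 0, hper'.b0 1] at mc4
  rw [hper'.b1 1, hper'.b2 1] at mc6
  rw [hper'.b3 1, hper'.b0 2] at mc8
  rw [hper'.b1 2, hper'.b2 2] at mc10
  have par : ∀ j, T j % 2 = (Ri + b (4 * 1 + j)) % 2 := by
    intro j
    have h1 : a (4 * 1 + j) = Ri + b (4 * 1 + j) := by
      have := ha (4 * 1 + j)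
      rw [hRi] at this
      exact_mod_cast this
    have h2 := H.he (4 * 1 + j)
    simp only [hT]
    rw [← h1]
    omega
  have q2 : T 2 % 2 = (Ri + 1) % 2 := by rw [par 2, hper'.b2 0]
  have q3 : T 3 % 2 = (Ri + 1) % 2 := by rw [par 3, hper'.b3 0]
  have q4 : T 4 % 2 = Ri % 2 := by rw [par 4, hper'.b0 1, add_zero]
  have q5 : T 5 % 2 = Ri % 2 := by rw [par 5, hper'.b1 1, add_zero]
  have q6 : T 6 % 2 = (Ri + 1) % 2 := by rw [par 6, hper'.b2 1]
  have q7 : T 7 % 2 = (Ri + 1) % 2 := by rw [par 7, hper'.b3 1]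
  have q8 : T 8 % 2 = Ri % 2 := by rw [par 8, hper'.b0 2, add_zero]
  have q9 : T 9 % 2 = Ri % 2 := by rw [par 9, hper'.b1 2, add_zero]
  have q10 : T 10 % 2 = (Ri + 1) % 2 := by rw [par 10, hper'.b2 2]
  have q11 : T 11 % 2 = (Ri + 1) % 2 := by rw [par 11, hper'.b3 2]
  exact int_end hc q2 q3 q4 q5 q6 q7 q8 q9 q10 q11 pc3 pc5 pc7 pc9 pc11 mc4 mc6 mc8 mc10

end

section
variable {α h R γ : ℝ} {a b e q p T : ℕ → ℤ} {P : ℕ → ℝ} {c : ℤ}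

lemma up_main (H : Ch α a e q p) (hper : Per b e) (hh : 0 < h)
    (hh1 : h ≤ 1 / 10 ^ 50) (hR : R * h = 1) (ha : ∀ j, (a j : ℝ) = R + b j) {Ri : ℤ}
    (hRi : R = Ri) (hc : (Ri % 2 = 0 ∧ c = 4) ∨ (Ri % 2 = 1 ∧ c = 5))
    (hγ : ¬∃ p q : ℤ, γ = (p : ℝ) + (q : ℝ) * α) :
    ¬ ∀ᶠ n : ℤ in cofinite,
      (1 - 3 * h + c * h ^ 2 + 10 ^ 32 * h ^ 3) / 4 < (|n| : ℝ) * nint (n * α - γ) := by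
  intro hm
  obtain ⟨J, hJ⟩ := up_vert H hγ hm
  refine up_core (γ := γ) (H.shift (4 * J)) (hper.shift J) hh hh1 hR (fun j => ha (4 * J + j))
    hRi hc ?_
  intro j σ τ hσ hτ
  have h1 := hJ (4 * J + (j + 1)) (by omega) σ τ hσ hτ
  have h2 : (1 - 3 * h + c * h ^ 2 + 10 ^ 32 * h ^ 3) *
      (1 - ab q (4 * J + (j + 1)) * th α q p (4 * J + (j + 1))) ≤
      |Vx (ab q (4 * J + (j + 1))) (th α q p (4 * J + (j + 1))) (Pf α q p γ (4 * J + (j + 1)))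
        (Pf α q p γ (4 * J + (j + 1) + 1)) σ τ| := by linarith
  exact h2

lemma exists_base (H : Ch α a e q p) (l0 l1 : ℝ) :
    ∃ x0 y0 : ℝ, LL α q p x0 y0 0 = l0 ∧ LL α q p x0 y0 1 = l1 := by
  have h := H.kap 0
  set κ := (q (0 + 1) : ℝ) * yy α q p 0 - q 0 * yy α q p (0 + 1) with hκ
  have hκ' : κ = (q 1 : ℝ) * yy α q p 0 - q 0 * yy α q p 1 := hκ
  refine ⟨-κ * (q 1 * l0 - q 0 * l1), -κ * (yy α q p 1 * l0 - yy α q p 0 * l1), ?_, ?_⟩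
  · unfold LL
    linear_combination l0 * h - κ * l0 * hκ'
  · unfold LL
    linear_combination l1 * h - κ * l1 * hκ'

lemma base_all (H : Ch α a e q p) (hrec : ∀ j, (a j : ℝ) * P (j + 1) = T j + P (j + 2) - e j * P j)
    (hpar : ∀ j, T j % 2 = a j % 2) {x0 y0 : ℝ} (h0 : LL α q p x0 y0 0 = (1 + P 0) / 2)
    (h1 : LL α q p x0 y0 1 = (1 + P 1) / 2) (j : ℕ) :
    ∃ k : ℤ, LL α q p x0 y0 j = (1 + P j) / 2 + k := by
  have key : ∀ j, (∃ k : ℤ, LL α q p x0 y0 j = (1 + P j) / 2 + k) ∧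
      (∃ k : ℤ, LL α q p x0 y0 (j + 1) = (1 + P (j + 1)) / 2 + k) := by
    intro j
    induction j with
    | zero => exact ⟨⟨0, by rw [h0]; simp⟩, ⟨0, by rw [h1]; simp⟩⟩
    | succ j ih =>
      refine ⟨ih.2, ?_⟩
      obtain ⟨⟨k, hk⟩, ⟨l, hl⟩⟩ := ih
      have hl2 := H.LLrec x0 y0 j
      have hr := hrec j
      have hex : ∃ s : ℤ, T j + a j + e j = 1 + 2 * s := by
        have := hpar j
        rcases H.he j with h | h
        · exact ⟨(T j + a j) / 2, by omega⟩
        · exact ⟨(T j + a j) / 2 - 1, by omega⟩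
      obtain ⟨s, hs⟩ := hex
      have hs' : (T j : ℝ) + a j + e j = 1 + 2 * s := by exact_mod_cast hs
      refine ⟨a j * l + e j * k + s, ?_⟩
      have : LL α q p x0 y0 (j + 1 + 1) = LL α q p x0 y0 (j + 2) := rfl
      rw [this, hl2, hl, hk]
      have e2 : P (j + 1 + 1) = P (j + 2) := rfl
      rw [e2]
      push_cast
      linear_combination (1 / 2 : ℝ) * hr + (1 / 2 : ℝ) * hs'
  exact (key j).1

/-- Values of the functionals at grid points. -/
lemma val_cases {L P : ℝ} {k : ℤ} (hP : |P| ≤ 1 / 100) (h : L = (1 + P) / 2 + k) :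
    (∃ σ : ℤ, (σ = 1 ∨ σ = -1) ∧ L = (σ + P) / 2 ∧ 9 / 20 ≤ |L| ∧ |L| ≤ 11 / 20) ∨ 7 / 5 ≤ |L| := by
  have hP' := abs_le.1 hP
  rcases (by omega : k = 0 ∨ k = -1 ∨ 1 ≤ k ∨ k ≤ -2) with rfl | rfl | hk | hk
  · left
    refine ⟨1, Or.inl rfl, by rw [h]; push_cast; ring, ?_⟩
    rw [h, abs_of_pos (by push_cast; linarith)]
    push_cast; constructor <;> linarith
  · left
    refine ⟨-1, Or.inr rfl, by rw [h]; push_cast; ring, ?_⟩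
    rw [h, abs_of_neg (by push_cast; linarith)]
    push_cast; constructor <;> linarith
  · right
    have : (1 : ℝ) ≤ k := by exact_mod_cast hk
    rw [h, abs_of_pos (by linarith)]; linarith
  · right
    have : (k : ℝ) ≤ -2 := by exact_mod_cast hk
    rw [h, abs_of_neg (by linarith)]; linarith

lemma y_ne (H : Ch α a e q p) (hP : ∀ j, |P j| ≤ 1 / 100) {x y : ℝ}
    (hL : ∀ j, ∃ k : ℤ, LL α q p x y j = (1 + P j) / 2 + k) : y ≠ 0 := by
  rintro rfl
  obtain ⟨J, hJ⟩ := H.ylim (ε := 1 / (4 * (|x| + 1))) (by positivity)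
  have h1 := hJ J le_rfl
  obtain ⟨k, hk⟩ := hL J
  have h2 : 9 / 20 ≤ |LL α q p x 0 J| := by
    rcases val_cases (hP J) hk with ⟨σ, _, _, h, _⟩ | h
    · exact h
    · linarith
  have h3 : |LL α q p x 0 J| = |x| * |yy α q p J| := by
    unfold LL
    rw [mul_zero, zero_sub, abs_neg, abs_mul]
  rw [lt_div_iff₀ (by positivity)] at h1
  have := abs_nonneg (yy α q p J)
  nlinarith

set_option maxHeartbeats 1000000 in
lemma gp (H : Ch α a e q p) (hh : 0 < h) (hh1 : h ≤ 1 / 10 ^ 50) (hR : R * h = 1)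
    (ha : ∀ j, (a j : ℝ) = R + b j) (hb : ∀ j, b j = 0 ∨ b j = 1)
    (hP : ∀ j, |P j| ≤ 1 / 100) {x y μ : ℝ} (hμ : μ ≤ 1)
    (hL : ∀ j, ∃ k : ℤ, LL α q p x y j = (1 + P j) / 2 + k)
    (hV : ∀ j, ∀ σ τ : ℤ, σ = 1 ∨ σ = -1 → τ = 1 ∨ τ = -1 →
      μ * (1 - ab q (j + 2) * th α q p (j + 2)) ≤
        |Vx (ab q (j + 2)) (th α q p (j + 2)) (P (j + 2)) (P (j + 3)) σ τ|)
    (hx : |y| * q 3 < |x| * |yy α q p 2|) : μ / 4 ≤ |x| * |y| := by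
  have hh2 : h ≤ 1 / 100 := hh1.trans (by norm_num)
  have hh3 : h ≤ 1 / 1000 := hh1.trans (by norm_num)
  by_contra hc
  push Not at hc
  have hxy : |x| * |y| < 1 / 4 := by linarith
  have hy := y_ne H hP hL
  have hy0 : 0 < |y| := abs_pos.2 hy
  -- vertices are impossible
  have hvert : ∀ j, ∀ σ τ : ℤ, σ = 1 ∨ σ = -1 → τ = 1 ∨ τ = -1 →
      LL α q p x y (j + 2) = (σ + P (j + 2)) / 2 → LL α q p x y (j + 3) = (τ + P (j + 3)) / 2 →
      False := by
    intro j σ τ hσ hτ h1 h2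
    have h3 := H.prod x y (j + 2)
    have e1 : LL α q p x y (j + 2 + 1) = LL α q p x y (j + 3) := rfl
    have hσ' : (σ : ℝ) = 1 ∨ (σ : ℝ) = -1 := by rcases hσ with rfl | rfl <;> norm_num
    have hτ' : (τ : ℝ) = 1 ∨ (τ : ℝ) = -1 := by rcases hτ with rfl | rfl <;> norm_num
    rw [e1, h1, h2, Vx_abs hσ' hτ'] at h3
    have h4 := hV j σ τ hσ hτ
    have h5 := H.one_sub_pos (j + 2)
    have h6 : μ / 4 * (1 - ab q (j + 2) * th α q p (j + 2)) ≤
        |x| * |y| * (1 - ab q (j + 2) * th α q p (j + 2)) := by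
      rw [h3]; linarith
    have h7 := le_of_mul_le_mul_right h6 (by linarith)
    linarith
  -- choose the level
  have hex : ∃ i, |x| * |yy α q p (i + 2)| ≤ |y| * q (i + 3) := by
    obtain ⟨J, hJ⟩ := H.ylim (ε := |y| / (|x| + 1)) (by positivity)
    refine ⟨J, ?_⟩
    have h1 := hJ (J + 2) (by omega)
    rw [lt_div_iff₀ (by positivity)] at h1
    have h2 : (1 : ℝ) ≤ q (J + 3) := by exact_mod_cast (H.qpos (J + 2))
    have := abs_nonneg (yy α q p (J + 2))
    nlinarith
  obtain ⟨j, hj1, hj2⟩ : ∃ j, |y| * q (j + 3) < |x| * |yy α q p (j + 2)| ∧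
      |x| * |yy α q p (j + 3)| ≤ |y| * q (j + 4) := by
    classical
    have hf := Nat.find_spec hex
    have hmin := fun m => @Nat.find_min _ _ hex m
    rcases hi : Nat.find hex with _ | i
    · rw [hi] at hf
      exact absurd hf (not_le.2 hx)
    · rw [hi] at hf
      refine ⟨i, ?_, hf⟩
      exact not_le.1 (hmin i (by omega))
  -- bounds
  have ab1 := H.ab_small hh hh2 hR ha hb (j + 1)
  have ab2 := H.ab_small hh hh2 hR ha hb (j + 2)
  have abn1 := H.ab_nonneg (j + 2)
  have abn2 := H.ab_nonneg (j + 3)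
  have th1 := H.th_small hh hh2 hR ha hb (j + 2)
  have th2 := H.th_small hh hh2 hR ha hb (j + 3)
  have prodle : ∀ i, ab q i ≤ 2 * h → 0 ≤ ab q i → |th α q p i| ≤ 2 * h →
      (q (i + 1) : ℝ) * |yy α q p i| ≤ 101 / 100 := by
    intro i h1 h2 h3
    have h4 := H.kap' i
    have h5 : |ab q i * th α q p i| ≤ 2 * h * (2 * h) := by
      rw [abs_mul, abs_of_nonneg h2]; gcongr
    have h6 := (abs_le.1 h5).2
    have h7 : (0 : ℝ) ≤ q (i + 1) * |yy α q p i| := mul_nonneg (H.qnnR _) (abs_nonneg _)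
    have h8 : 2 * h * (2 * h) ≤ 1 / 1000 := by nlinarith
    have h9 : (q (i + 1) : ℝ) * |yy α q p i| * (999 / 1000) ≤
        q (i + 1) * |yy α q p i| * (1 - ab q i * th α q p i) :=
      mul_le_mul_of_nonneg_left (by linarith) h7
    rw [h4] at h9
    linarith
  have k1 := prodle (j + 2) ab1 abn1 th1
  have k2 := prodle (j + 3) ab2 abn2 th2
  have e3 : j + 2 + 1 = j + 3 := rfl
  have e4 : j + 3 + 1 = j + 4 := rfl
  rw [e3] at k1
  rw [e4] at k2
  have q3 := H.qposR (j + 2)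
  have q4 := H.qposR (j + 3)
  rw [e3] at q3
  rw [e4] at q4
  set A := |y| * (q (j + 3) : ℝ) with hA
  set B := |x| * |yy α q p (j + 3)| with hB
  have hA0 : 0 ≤ A := by positivity
  have hB0 : 0 ≤ B := by positivity
  have hxy0 : 0 ≤ |x| * |y| := by positivity
  have A2 : A ≤ 3 / 5 := by
    have h1 : A * A ≤ A * (|x| * |yy α q p (j + 2)|) := mul_le_mul_of_nonneg_left hj1.le hA0
    have h2 : A * (|x| * |yy α q p (j + 2)|) = (|x| * |y|) * (q (j + 3) * |yy α q p (j + 2)|) := by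
      rw [hA]; ring
    have h3 : (|x| * |y|) * (q (j + 3) * |yy α q p (j + 2)|) ≤ 1 / 4 * (101 / 100) :=
      mul_le_mul hxy.le k1 (by positivity) (by norm_num)
    nlinarith
  have B2 : B ≤ 3 / 5 := by
    have h1 : B * B ≤ B * (|y| * q (j + 4)) := mul_le_mul_of_nonneg_left hj2 hB0
    have h2 : B * (|y| * q (j + 4)) = (|x| * |y|) * (q (j + 4) * |yy α q p (j + 3)|) := by
      rw [hB]; ring
    have h3 : (|x| * |y|) * (q (j + 4) * |yy α q p (j + 3)|) ≤ 1 / 4 * (101 / 100) :=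
      mul_le_mul hxy.le k2 (by positivity) (by norm_num)
    nlinarith
  have L3 : |LL α q p x y (j + 3)| ≤ A + B := by
    unfold LL
    refine (abs_sub _ _).trans (le_of_eq ?_)
    rw [abs_mul, abs_mul, abs_of_pos q3, hA, hB]
    ring
  obtain ⟨k3, hk3⟩ := hL (j + 3)
  rcases val_cases (hP (j + 3)) hk3 with ⟨σ, hσ, hσe, l1, l2⟩ | hbad
  swap
  · linarith
  obtain ⟨k2', hk2⟩ := hL (j + 2)
  rcases val_cases (hP (j + 2)) hk2 with ⟨τ, hτ, hτe, -, -⟩ | m1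
  · exact hvert j τ σ hτ hσ hτe hσe
  obtain ⟨k4, hk4⟩ := hL (j + 4)
  rcases val_cases (hP (j + 4)) hk4 with ⟨τ, hτ, hτe, -, -⟩ | m2
  · exact hvert (j + 1) σ τ hσ hτ hσe hτe
  have X : 13 / 10 * (q (j + 3) : ℝ) ≤ |x| := by
    have h1 := H.xeq x y (j + 2)
    rw [e3] at h1
    have h2 := abs_sub_abs_le_abs_sub (LL α q p x y (j + 2) * q (j + 3))
      (LL α q p x y (j + 3) * q (j + 2))
    rw [← h1, abs_mul, abs_mul, abs_of_pos q3, abs_of_nonneg (H.qnnR (j + 2))] at h2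
    have h3 := H.ab_mul (j + 2)
    rw [e3] at h3
    have h4 : (q (j + 2) : ℝ) ≤ 2 * h * q (j + 3) := by rw [← h3]; gcongr
    have h5 : |LL α q p x y (j + 3)| * q (j + 2) ≤ 11 / 20 * (2 * h * q (j + 3)) := by
      apply mul_le_mul l2 h4 (H.qnnR _) (by norm_num)
    have h6 : h * q (j + 3) ≤ 1 / 1000 * q (j + 3) := by gcongr
    have h7 : 7 / 5 * (q (j + 3) : ℝ) ≤ |LL α q p x y (j + 2)| * q (j + 3) :=
      mul_le_mul_of_nonneg_right m1 q3.le
    linarith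
  have Y : 13 / 10 * |yy α q p (j + 3)| ≤ |y| := by
    have h1 := H.yeq x y (j + 3)
    rw [e4] at h1
    have h2 := abs_sub_abs_le_abs_sub (LL α q p x y (j + 4) * yy α q p (j + 3))
      (LL α q p x y (j + 3) * yy α q p (j + 4))
    rw [← h1, abs_mul, abs_mul] at h2
    have h3 := H.th_mul (j + 3)
    rw [e4] at h3
    have h4 : |yy α q p (j + 4)| ≤ 2 * h * |yy α q p (j + 3)| := by
      rw [← h3, abs_mul]; gcongr
    have h5 : |LL α q p x y (j + 3)| * |yy α q p (j + 4)| ≤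
        11 / 20 * (2 * h * |yy α q p (j + 3)|) := by
      apply mul_le_mul l2 h4 (abs_nonneg _) (by norm_num)
    have h6 : h * |yy α q p (j + 3)| ≤ 1 / 1000 * |yy α q p (j + 3)| := by gcongr
    have h8 := abs_nonneg (yy α q p (j + 3))
    have h7 : 7 / 5 * |yy α q p (j + 3)| ≤ |LL α q p x y (j + 4)| * |yy α q p (j + 3)| :=
      mul_le_mul_of_nonneg_right m2 h8
    linarith
  have Z : (q (j + 3) : ℝ) * |yy α q p (j + 3)| ≤ 1 / 100 := by
    have h3 := H.ab_mul (j + 3)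
    rw [e4] at h3
    rw [← h3, mul_assoc]
    have : ab q (j + 3) * (q (j + 4) * |yy α q p (j + 3)|) ≤ 2 * h * (101 / 100) := by
      apply mul_le_mul ab2 k2 (by positivity) (by positivity)
    linarith
  have F := mul_nonneg (sub_nonneg.2 X) (sub_nonneg.2 Y)
  have hAB : A + B ≥ 9 / 20 := by linarith
  have F2 : (|x| - 13 / 10 * (q (j + 3) : ℝ)) * (|y| - 13 / 10 * |yy α q p (j + 3)|) =
      |x| * |y| - 13 / 10 * B - 13 / 10 * A + 169 / 100 * (q (j + 3) * |yy α q p (j + 3)|) := by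
    rw [hA, hB]; ring
  rw [F2] at F
  linarith
end

/-- Sufficient integer condition at a minus level. -/
def MC2 (c b1 b2 s u w v : ℤ) : Prop := ∀ σ τ : ℤ, σ = 1 ∨ σ = -1 → τ = 1 ∨ τ = -1 →
  -2 ≤ σ * u + τ * w - 2 * σ * τ ∨ (σ * u + τ * w - 2 * σ * τ = -3 ∧
    c - 1 ≤ (σ * u - σ * τ) * (τ * w - σ * τ) - σ * s + τ * v - b1 * (σ * u - σ * τ)
      - b2 * (τ * w - σ * τ))

/-- Sufficient integer condition at a plus level. -/
def PC2 (u w : ℤ) : Prop := ∀ σ τ : ℤ, σ = 1 ∨ σ = -1 → τ = 1 ∨ τ = -1 → -2 ≤ σ * u + τ * w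

lemma mc2_e1 : MC2 4 0 1 0 0 1 1 := by
  rintro σ τ (rfl | rfl) (rfl | rfl) <;> norm_num
lemma mc2_e2 : MC2 4 1 0 1 1 0 0 := by
  rintro σ τ (rfl | rfl) (rfl | rfl) <;> norm_num
lemma mc2_o1 : MC2 5 0 1 1 1 0 (-2) := by
  rintro σ τ (rfl | rfl) (rfl | rfl) <;> norm_num
lemma mc2_o2 : MC2 5 1 0 0 (-2) 1 1 := by
  rintro σ τ (rfl | rfl) (rfl | rfl) <;> norm_num
lemma pc2_1 : PC2 0 0 := by
  rintro σ τ (rfl | rfl) (rfl | rfl) <;> norm_num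
lemma pc2_2 : PC2 1 1 := by
  rintro σ τ (rfl | rfl) (rfl | rfl) <;> norm_num
lemma pc2_3 : PC2 0 (-2) := by
  rintro σ τ (rfl | rfl) (rfl | rfl) <;> norm_num

lemma lex_nonneg {h n : ℝ} {m : ℤ} (hh : 0 < h) (hh1 : h ≤ 1 / 10 ^ 50) (hn : |n| ≤ 2 * 10 ^ 30)
    (hm : -2 ≤ m) : 0 ≤ ((m : ℝ) + 3) * h + n * h ^ 2 := by
  have h1 : |n * h| < 1 := by
    rw [abs_mul, abs_of_pos hh]
    calc |n| * h ≤ 2 * 10 ^ 30 * (1 / 10 ^ 50) := by gcongr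
      _ < 1 := by norm_num
  have h2 := (abs_lt.1 h1).1
  have h3 : (-2 : ℝ) ≤ m := by exact_mod_cast hm
  have : ((m : ℝ) + 3) * h + n * h ^ 2 = h * ((m + 3) + n * h) := by ring
  rw [this]
  apply mul_nonneg hh.le
  linarith

section
variable {α h R : ℝ} {a b e q p T : ℕ → ℤ} {P : ℕ → ℝ} {c : ℤ}

lemma low_PC (H : Ch α a e q p) (S : Sol h R b e T P) (hh : 0 < h)
    (hh1 : h ≤ 1 / 10 ^ 50) (hR : R * h = 1) (ha : ∀ j, (a j : ℝ) = R + b j)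
    (hb : ∀ j, b j = 0 ∨ b j = 1) (hc : |(c : ℝ)| ≤ 6)
    (j : ℕ) (hej : e (j + 2) = 1) (hpc : PC2 (T (j + 1)) (T (j + 2)))
    (σ τ : ℤ) (hσ : σ = 1 ∨ σ = -1) (hτ : τ = 1 ∨ τ = -1) :
    (1 - 3 * h + c * h ^ 2 - 10 ^ 32 * h ^ 3) * (1 - ab q (j + 2) * th α q p (j + 2)) ≤
        |Vx (ab q (j + 2)) (th α q p (j + 2)) (P (j + 2)) (P (j + 3)) σ τ| := by
  have hh2 : h ≤ 1 / 100 := hh1.trans (by norm_num)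
  obtain ⟨c2, hap⟩ := lev_plus H S hh hh2 hR ha hb j hej hσ hτ
  refine le_trans ?_ (le_abs_self _)
  refine cmp_low hh hh2 (H.ab_ap hh hh2 hR ha hb j) (H.th_ap hh hh2 hR ha hb (j + 2)) hc
    (H.one_sub_pos _) hap ?_
  refine lex_nonneg hh hh1 ?_ (hpc σ τ hσ hτ)
  have h3 := abs_le.1 hap.2.2.1
  have h4 := abs_le.1 hc
  rw [hej, abs_le]
  push_cast
  constructor <;> linarith

lemma low_MC (H : Ch α a e q p) (S : Sol h R b e T P) (hh : 0 < h)
    (hh1 : h ≤ 1 / 10 ^ 50) (hR : R * h = 1) (ha : ∀ j, (a j : ℝ) = R + b j)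
    (hb : ∀ j, b j = 0 ∨ b j = 1) (hc : |(c : ℝ)| ≤ 6)
    (j : ℕ) (hej1 : e (j + 1) = 1) (hej : e (j + 2) = -1)
    (hmc : MC2 c (b (j + 1)) (b (j + 2)) (T j) (T (j + 1)) (T (j + 2)) (T (j + 3)))
    (σ τ : ℤ) (hσ : σ = 1 ∨ σ = -1) (hτ : τ = 1 ∨ τ = -1) :
    (1 - 3 * h + c * h ^ 2 - 10 ^ 32 * h ^ 3) * (1 - ab q (j + 2) * th α q p (j + 2)) ≤
        |Vx (ab q (j + 2)) (th α q p (j + 2)) (P (j + 2)) (P (j + 3)) σ τ| := by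
  have hh2 : h ≤ 1 / 100 := hh1.trans (by norm_num)
  have hap := lev_minus H S hh hh2 hR ha hb j hej1 hej hσ hτ
  refine le_trans ?_ (le_abs_self _)
  refine cmp_low hh hh2 (H.ab_ap hh hh2 hR ha hb j) (H.th_ap hh hh2 hR ha hb (j + 2)) hc
    (H.one_sub_pos _) hap ?_
  have h3 := abs_le.1 hap.2.2.1
  have h4 := abs_le.1 hc
  rcases hmc σ τ hσ hτ with hm | ⟨hm, hn⟩
  · refine lex_nonneg hh hh1 ?_ hm
    rw [hej, abs_le]
    push_cast at h3 ⊢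
    constructor <;> linarith
  · rw [hm]
    have hn' := (Int.cast_le (R := ℝ)).2 hn
    rw [hej]
    have : (0 : ℝ) < h ^ 2 := by positivity
    push_cast at hn' ⊢
    have e1 : (-3 + 3 : ℝ) * h = 0 := by ring
    rw [e1, zero_add]
    apply mul_nonneg _ this.le
    linarith

/-- Solving the periodic system. -/
lemma solve {t0 t1 t2 t3 : ℝ} (hh : 0 < h) (hh1 : h ≤ 1 / 100) (hR : R * h = 1)
    (b0 : |t0| ≤ 2) (b1 : |t1| ≤ 2) (b2 : |t2| ≤ 2) (b3 : |t3| ≤ 2) :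
    ∃ r0 r1 r2 r3 : ℝ, R * r0 = t0 + r1 + r3 ∧ R * r1 = t1 + r2 - r0 ∧
      (R + 1) * r2 = t2 + r3 + r1 ∧ (R + 1) * r3 = t3 + r0 - r2 ∧
      |r0| ≤ 20 * h ∧ |r1| ≤ 20 * h ∧ |r2| ≤ 20 * h ∧ |r3| ≤ 20 * h := by
  have hR0 : 0 < R := by
    by_contra hc
    push Not at hc
    nlinarith
  set g := (R + 1)⁻¹ with hg
  have hgR : (R + 1) * g = 1 := mul_inv_cancel₀ (by linarith)
  have hg0 : 0 < g := by positivity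
  have hgh : g ≤ h := by nlinarith
  set κ := h - g with hκ
  have hκ0 : 0 ≤ κ := by linarith
  have hκh : κ ≤ 1 / 100 := by linarith
  set D0 := t0 * h - t2 * g with hD
  set W0 := t1 * h + t3 * g with hW
  set d := (D0 + κ * W0) / (1 + κ ^ 2) with hd
  have hk2 : 0 < 1 + κ ^ 2 := by positivity
  have hd' : d * (1 + κ ^ 2) = D0 + κ * W0 := div_mul_cancel₀ _ hk2.ne'
  set w := W0 - κ * d with hw
  have mb : ∀ {t s : ℝ}, |t| ≤ 2 → 0 < s → s ≤ h → |t * s| ≤ 2 * h := by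
    intro t s ht hs hsh
    rw [abs_mul, abs_of_pos hs]
    gcongr
  have hD4 : |D0| ≤ 4 * h := by
    refine (abs_sub _ _).trans ?_
    linarith [mb b0 hh le_rfl, mb b2 hg0 hgh]
  have hW4 : |W0| ≤ 4 * h := by
    refine (abs_add_le _ _).trans ?_
    linarith [mb b1 hh le_rfl, mb b3 hg0 hgh]
  have hd5 : |d| ≤ 5 * h := by
    rw [hd, abs_div, abs_of_pos hk2, div_le_iff₀ hk2]
    refine (abs_add_le _ _).trans ?_
    rw [abs_mul, abs_of_nonneg hκ0]
    have : κ * |W0| ≤ 1 / 100 * (4 * h) := mul_le_mul hκh hW4 (abs_nonneg _) (by norm_num)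
    nlinarith [mul_nonneg hh.le (sq_nonneg κ)]
  have hw5 : |w| ≤ 5 * h := by
    refine (abs_sub _ _).trans ?_
    rw [abs_mul, abs_of_nonneg hκ0]
    have : κ * |d| ≤ 1 / 100 * (5 * h) := mul_le_mul hκh hd5 (abs_nonneg _) (by norm_num)
    linarith
  have fin : ∀ {z s : ℝ}, |z| ≤ 3 → 0 < s → s ≤ h → |z * s| ≤ 20 * h := by
    intro z s ht hs hsh
    rw [abs_mul, abs_of_pos hs]
    have : |z| * s ≤ 3 * h := by gcongr
    linarith
  refine ⟨(t0 + w) * h, (t1 - d) * h, (t2 + w) * g, (t3 + d) * g, ?_, ?_, ?_, ?_, ?_, ?_, ?_, ?_⟩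
  · linear_combination (t0 + w) * hR + hw
  · linear_combination (t1 - d) * hR - hd' - κ * hw
  · linear_combination (t2 + w) * hgR + hw
  · linear_combination (t3 + d) * hgR + hd' + κ * hw
  · exact fin ((abs_add_le _ _).trans (by linarith)) hh le_rfl
  · exact fin ((abs_sub _ _).trans (by linarith)) hh le_rfl
  · exact fin ((abs_add_le _ _).trans (by linarith)) hg0 hgh
  · exact fin ((abs_add_le _ _).trans (by linarith)) hg0 hgh

/-- Periodic sequences. -/
def per4 {X : Type} (x0 x1 x2 x3 : X) : ℕ → X
  | 0 => x0
  | 1 => x1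
  | 2 => x2
  | 3 => x3
  | n + 4 => per4 x0 x1 x2 x3 n

lemma per4_val {X : Type} (x0 x1 x2 x3 : X) (k : ℕ) :
    per4 x0 x1 x2 x3 (4 * k) = x0 ∧ per4 x0 x1 x2 x3 (4 * k + 1) = x1 ∧
    per4 x0 x1 x2 x3 (4 * k + 2) = x2 ∧ per4 x0 x1 x2 x3 (4 * k + 3) = x3 := by
  induction k with
  | zero => exact ⟨rfl, rfl, rfl, rfl⟩
  | succ k ih => exact ih

lemma cases4 {C : ℕ → Prop} (h0 : ∀ k, C (4 * k)) (h1 : ∀ k, C (4 * k + 1))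
    (h2 : ∀ k, C (4 * k + 2)) (h3 : ∀ k, C (4 * k + 3)) (j : ℕ) : C j := by
  obtain ⟨k, rfl | rfl | rfl | rfl⟩ :
      ∃ k, j = 4 * k ∨ j = 4 * k + 1 ∨ j = 4 * k + 2 ∨ j = 4 * k + 3 := ⟨j / 4, by omega⟩
  · exact h0 k
  · exact h1 k
  · exact h2 k
  · exact h3 k

lemma low_main {t0 t1 t2 t3 Ri : ℤ} (H : Ch α a e q p) (hper : Per b e) (hh : 0 < h)
    (hh1 : h ≤ 1 / 10 ^ 50) (hR : R * h = 1) (ha : ∀ j, (a j : ℝ) = R + b j)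
    (hRi : R = Ri) (hc : c = 4 ∨ c = 5)
    (b0 : |(t0 : ℝ)| ≤ 2) (b1 : |(t1 : ℝ)| ≤ 2) (b2 : |(t2 : ℝ)| ≤ 2) (b3 : |(t3 : ℝ)| ≤ 2)
    (c0 : t0 % 2 = Ri % 2) (c1 : t1 % 2 = Ri % 2) (c2 : t2 % 2 = (Ri + 1) % 2)
    (c3 : t3 % 2 = (Ri + 1) % 2)
    (p1 : PC2 t0 t1) (p2 : PC2 t2 t3) (m1 : MC2 c 0 1 t0 t1 t2 t3) (m2 : MC2 c 1 0 t2 t3 t0 t1) :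
    ∃ γ : ℝ, (¬∃ p q : ℤ, γ = (p : ℝ) + (q : ℝ) * α) ∧ ∀ᶠ n : ℤ in cofinite,
      (1 - 3 * h + c * h ^ 2 - 10 ^ 32 * h ^ 3) / 4 - h ^ 3 ≤ (|n| : ℝ) * nint (n * α - γ) := by
  have hh2 : h ≤ 1 / 100 := hh1.trans (by norm_num)
  have hb := hper.hb
  have hc6 : |(c : ℝ)| ≤ 6 := by rcases hc with rfl | rfl <;> norm_num
  obtain ⟨r0, r1, r2, r3, s0, s1, s2, s3, d0, d1, d2, d3⟩ := solve hh hh2 hR b0 b1 b2 b3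
  set T := per4 t0 t1 t2 t3 with hT
  set P := per4 r3 r0 r1 r2 with hP
  have Tv := per4_val t0 t1 t2 t3
  have Pv := per4_val r3 r0 r1 r2
  rw [← hT] at Tv
  rw [← hP] at Pv
  have S : Sol h R b e T P := by
    refine ⟨cases4 ?_ ?_ ?_ ?_, cases4 ?_ ?_ ?_ ?_, cases4 ?_ ?_ ?_ ?_⟩ <;> intro k
    · rw [(Tv k).1, (Pv k).1, (Pv k).2.1, (Pv k).2.2.1, hper.b0, hper.e0]
      push_cast; linarith
    · have e1 : P (4 * k + 1 + 1) = r1 := (Pv k).2.2.1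
      have e2 : P (4 * k + 1 + 2) = r2 := (Pv k).2.2.2
      rw [(Tv k).2.1, (Pv k).2.1, e1, e2, hper.b1, hper.e1]
      push_cast; linarith
    · have e1 : P (4 * k + 2 + 1) = r2 := (Pv k).2.2.2
      have e2 : P (4 * k + 2 + 2) = r3 := (Pv (k + 1)).1
      rw [(Tv k).2.2.1, (Pv k).2.2.1, e1, e2, hper.b2, hper.e2]
      push_cast; linarith
    · have e1 : P (4 * k + 3 + 1) = r3 := (Pv (k + 1)).1
      have e2 : P (4 * k + 3 + 2) = r0 := (Pv (k + 1)).2.1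
      rw [(Tv k).2.2.2, (Pv k).2.2.2, e1, e2, hper.b3, hper.e3]
      push_cast; linarith
    · rw [(Pv k).1]; exact d3
    · rw [(Pv k).2.1]; exact d0
    · rw [(Pv k).2.2.1]; exact d1
    · rw [(Pv k).2.2.2]; exact d2
    · rw [(Tv k).1]; linarith
    · rw [(Tv k).2.1]; linarith
    · rw [(Tv k).2.2.1]; linarith
    · rw [(Tv k).2.2.2]; linarith
  have hV : ∀ j, ∀ σ τ : ℤ, σ = 1 ∨ σ = -1 → τ = 1 ∨ τ = -1 →
      (1 - 3 * h + c * h ^ 2 - 10 ^ 32 * h ^ 3) * (1 - ab q (j + 2) * th α q p (j + 2)) ≤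
        |Vx (ab q (j + 2)) (th α q p (j + 2)) (P (j + 2)) (P (j + 3)) σ τ| := by
    apply cases4
    · intro k
      refine low_MC H S hh hh1 hR ha hb hc6 _ (hper.e1 k) (hper.e2 k) ?_
      rw [hper.b1, hper.b2, (Tv k).1, (Tv k).2.1, (Tv k).2.2.1, (Tv k).2.2.2]
      exact m1
    · intro k
      refine low_PC H S hh hh1 hR ha hb hc6 _ (hper.e3 k) ?_
      have e1 : T (4 * k + 1 + 1) = t2 := (Tv k).2.2.1
      have e2 : T (4 * k + 1 + 2) = t3 := (Tv k).2.2.2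
      rw [e1, e2]
      exact p2
    · intro k
      refine low_MC H S hh hh1 hR ha hb hc6 _ (hper.e3 k) (hper.e0 (k + 1)) ?_
      have e1 : T (4 * k + 2 + 1) = t3 := (Tv k).2.2.2
      have e2 : T (4 * k + 2 + 2) = t0 := (Tv (k + 1)).1
      have e3 : T (4 * k + 2 + 3) = t1 := (Tv (k + 1)).2.1
      have e4 : b (4 * k + 2 + 1) = 1 := hper.b3 k
      have e5 : b (4 * k + 2 + 2) = 0 := hper.b0 (k + 1)
      rw [(Tv k).2.2.1, e1, e2, e3, e4, e5]
      exact m2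
    · intro k
      refine low_PC H S hh hh1 hR ha hb hc6 _ (hper.e1 (k + 1)) ?_
      have e1 : T (4 * k + 3 + 1) = t0 := (Tv (k + 1)).1
      have e2 : T (4 * k + 3 + 2) = t1 := (Tv (k + 1)).2.1
      rw [e1, e2]
      exact p1
  have hai : ∀ j, a j = Ri + b j := by
    intro j
    have := ha j
    rw [hRi] at this
    exact_mod_cast this
  have hpar : ∀ j, T j % 2 = a j % 2 := by
    apply cases4 <;> intro k
    · rw [hai, (Tv k).1, hper.b0, add_zero]; exact c0
    · rw [hai, (Tv k).2.1, hper.b1, add_zero]; exact c1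
    · rw [hai, (Tv k).2.2.1, hper.b2]; exact c2
    · rw [hai, (Tv k).2.2.2, hper.b3]; exact c3
  have hP1 : ∀ j, |P j| ≤ 1 / 100 := by
    intro j
    refine (S.small j).trans ?_
    have : h ≤ 1 / 10000 := hh1.trans (by norm_num)
    linarith
  obtain ⟨x0, y0, l0, l1⟩ := exists_base H ((1 + P 0) / 2) ((1 + P 1) / 2)
  have hall := base_all H (T := T) (fun j => by rw [ha j]; exact S.hrec j) hpar l0 l1
  have hpt : ∀ n m : ℤ, ∀ j, ∃ k : ℤ,
      LL α q p (n + x0) (n * α - m + y0) j = (1 + P j) / 2 + k := by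
    intro n m j
    obtain ⟨k, hk⟩ := hall j
    obtain ⟨l, hl⟩ := Ch.LLint (α := α) (q := q) (p := p) x0 y0 j n m
    refine ⟨k + l, ?_⟩
    rw [hl, hk]; push_cast; ring
  refine ⟨-y0, ?_, ?_⟩
  · rintro ⟨u, v, huv⟩
    refine y_ne H hP1 (hpt v (-u)) ?_
    push_cast; linarith
  · set μ := 1 - 3 * h + c * h ^ 2 - 10 ^ 32 * h ^ 3 with hμ
    have h3 : 0 < h ^ 3 := by positivity
    have hμ1 : μ ≤ 1 := by
      have : (c : ℝ) ≤ 6 := (abs_le.1 hc6).2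
      have : (c : ℝ) * h ^ 2 ≤ 6 * h ^ 2 := by gcongr
      nlinarith
    have hy2 : 0 < |yy α q p 2| := abs_pos.2 (H.yynz 2)
    set N := (q 3 : ℝ) / |yy α q p 2| + |x0| + |x0| / h ^ 3 with hN
    have hq3 := H.qposR 2
    have hfin : {n : ℤ | ¬ N < (|n| : ℝ)}.Finite := by
      refine (Set.finite_Icc (-⌈N⌉) ⌈N⌉).subset fun n hn => ?_
      have hn : (|n| : ℝ) ≤ N := not_lt.1 hn
      have h1 : ((|n| : ℤ) : ℝ) ≤ (⌈N⌉ : ℤ) := by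
        push_cast; exact hn.trans (Int.le_ceil N)
      exact abs_le.1 (by exact_mod_cast h1 : |n| ≤ ⌈N⌉)
    have hev : ∀ᶠ n : ℤ in cofinite, N < (|n| : ℝ) := hfin
    filter_upwards [hev] with n hn
    set m := round ((n : ℝ) * α - -y0) with hm
    have hy : nint ((n : ℝ) * α - -y0) = |n * α - m + y0| := by
      unfold nint
      congr 1; rw [← hm]; ring
    have hyh : |n * α - m + y0| ≤ 1 / 2 := by
      rw [← hy]; exact abs_sub_round _
    have t1 : 0 ≤ |x0| / h ^ 3 := by positivity
    have t2 : 0 ≤ (q 3 : ℝ) / |yy α q p 2| := by positivity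
    have hxn : |(n : ℝ)| - |x0| ≤ |n + x0| := by
      have := abs_sub_abs_le_abs_sub (n : ℝ) (-x0)
      rwa [abs_neg, sub_neg_eq_add] at this
    have hxn' : |(n : ℝ) + x0| ≤ |(n : ℝ)| + |x0| := abs_add_le _ _
    have hg := gp H hh hh1 hR ha hb hP1 hμ1 (hpt n m) hV (by
      have h5 : (q 3 : ℝ) / |yy α q p 2| < |n + x0| := by linarith
      rw [div_lt_iff₀ hy2] at h5
      have : |n * α - m + y0| * q 3 ≤ 1 / 2 * q 3 := by gcongr
      have : (0 : ℝ) < q 3 := hq3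
      linarith)
    rw [hy]
    set Y := |n * α - m + y0| with hY
    have hY0 : 0 ≤ Y := abs_nonneg _
    have h6 : |(n : ℝ) + x0| * Y ≤ (|(n : ℝ)| + |x0|) * Y := by gcongr
    rcases le_total (|x0| * Y) (h ^ 3) with hs | hs
    · linarith
    · have h7 : |x0| / h ^ 3 ≤ |(n : ℝ)| := by linarith [abs_nonneg x0]
      rw [div_le_iff₀ h3] at h7
      have h8 : |x0| * Y ≤ |(n : ℝ)| * h ^ 3 * Y := by gcongr
      have h9 : h ^ 3 ≤ |(n : ℝ)| * Y * h ^ 3 := by linarith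
      have h10 : 1 ≤ |(n : ℝ)| * Y := by
        by_contra hcc
        push Not at hcc
        nlinarith
      linarith

end

lemma nicf_inv (α : ℝ) (i : ℕ) (h : Irrational (nicfT α i)) :
    (nicfT α i)⁻¹ = nicfA α (i + 1) + nicfE α (i + 2) * nicfT α (i + 1) := by
  simp only [nicfA, nicfE, nicfT]
  have h1 := Int.floor_add_fract (nicfT α i)⁻¹
  split_ifs with hc
  · push_cast; linarith
  · have h0 : Int.fract (nicfT α i)⁻¹ ≠ 0 := by
      intro h0; rw [h0] at hc; norm_num at hc
    have h2 : (⌈(nicfT α i)⁻¹⌉ : ℝ) = ⌊(nicfT α i)⁻¹⌋ + 1 := by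
      have := Int.ceil_eq_add_one_sub_fract h0
      linarith
    rw [h2]; push_cast; linarith

lemma nicf_E (α : ℝ) (i : ℕ) : nicfE α i = 1 ∨ nicfE α i = -1 := by
  match i with
  | 0 => left; rfl
  | 1 => left; rfl
  | i + 2 => simp only [nicfE]; split_ifs <;> simp

lemma nicf_T {α : ℝ} (h : Irrational α) (h0 : 0 < α) (h1 : α < 1 / 2) (i : ℕ) :
    Irrational (nicfT α i) ∧ 0 < nicfT α i ∧ nicfT α i < 1 / 2 := by
  induction i with
  | zero => exact ⟨h, h0, h1⟩
  | succ i ih =>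
    have hf : Irrational (Int.fract (nicfT α i)⁻¹) := by
      have := ih.1.inv.sub_intCast ⌊(nicfT α i)⁻¹⌋
      exact this
    have hn := Int.fract_nonneg (nicfT α i)⁻¹
    have hl := Int.fract_lt_one (nicfT α i)⁻¹
    have hne : Int.fract (nicfT α i)⁻¹ ≠ 1 / 2 := by
      have := hf.ne_rat (1 / 2)
      push_cast at this; exact this
    simp only [nicfT]
    split_ifs with hc
    · exact ⟨hf, lt_of_le_of_ne hn hf.ne_zero.symm, lt_of_le_of_ne hc hne⟩
    · refine ⟨?_, by linarith, by linarith [not_le.1 hc]⟩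
      have := hf.intCast_sub 1
      push_cast at this; exact this

lemma nicf_A {α : ℝ} (h : Irrational α) (h0 : 0 < α) (h1 : α < 1 / 2) (i : ℕ) :
    2 ≤ nicfA α (i + 1) := by
  obtain ⟨a, b, c⟩ := nicf_T h h0 h1 i
  have h2 : (2 : ℝ) ≤ (nicfT α i)⁻¹ := by
    rw [le_inv_comm₀ (by norm_num) b]; linarith
  have h3 : (2 : ℤ) ≤ ⌊(nicfT α i)⁻¹⌋ := Int.le_floor.2 (by exact_mod_cast h2)
  simp only [nicfA]
  split_ifs
  · exact h3
  · exact h3.trans (Int.floor_le_ceil _)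

/-- Denominators of the chain. -/
noncomputable def qch (α : ℝ) : ℕ → ℤ
  | 0 => 0
  | 1 => 1
  | j + 2 => nicfA α (j + 1) * qch α (j + 1) + nicfE α (j + 1) * qch α j

/-- Numerators of the chain. -/
noncomputable def pch (α : ℝ) : ℕ → ℤ
  | 0 => 1
  | 1 => 0
  | j + 2 => nicfA α (j + 1) * pch α (j + 1) + nicfE α (j + 1) * pch α j

lemma sgn_sq {e : ℤ} (h : e = 1 ∨ e = -1) : e ^ 2 = 1 := by rcases h with rfl | rfl <;> norm_num

lemma ych {α : ℝ} (h : Irrational α) (h0 : 0 < α) (h1 : α < 1 / 2) (j : ℕ) :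
    (qch α (j + 1) : ℝ) * α - pch α (j + 1) =
      -(nicfE α (j + 1)) * nicfT α j * ((qch α j : ℝ) * α - pch α j) := by
  induction j with
  | zero => simp [qch, pch, nicfE, nicfT]
  | succ j ih =>
    have e2 : ((nicfE α (j + 1) : ℝ)) ^ 2 = 1 := by exact_mod_cast sgn_sq (nicf_E α (j + 1))
    have hi := nicf_inv α j (nicf_T h h0 h1 j).1
    have ht := (nicf_T h h0 h1 j).2.1
    have hi' : 1 = nicfT α j * (nicfA α (j + 1) + nicfE α (j + 2) * nicfT α (j + 1)) := by
      rw [← hi]; field_simp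
    have hrec : (qch α (j + 1 + 1) : ℝ) * α - pch α (j + 1 + 1) =
        nicfA α (j + 1) * ((qch α (j + 1) : ℝ) * α - pch α (j + 1)) +
        nicfE α (j + 1) * ((qch α j : ℝ) * α - pch α j) := by
      simp only [qch, pch]; push_cast; ring
    rw [hrec]
    show _ = -(nicfE α (j + 2) : ℝ) * _ * _
    rw [ih]
    set Y := (qch α j : ℝ) * α - pch α j
    linear_combination (nicfE α (j + 1) * Y : ℝ) * hi'

lemma qch_lt {α : ℝ} (h : Irrational α) (h0 : 0 < α) (h1 : α < 1 / 2) (j : ℕ) :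
    0 ≤ qch α j ∧ qch α j < qch α (j + 1) := by
  induction j with
  | zero => simp [qch]
  | succ j ih =>
    refine ⟨by linarith [ih.1, ih.2], ?_⟩
    have ha := nicf_A h h0 h1 j
    show _ < nicfA α (j + 1) * qch α (j + 1) + nicfE α (j + 1) * qch α j
    rcases nicf_E α (j + 1) with he | he <;> rw [he] <;> nlinarith [ih.1, ih.2]

lemma ch_nicf {α : ℝ} (h : Irrational α) (h0 : 0 < α) (h1 : α < 1 / 2) :
    Ch α (fun j => nicfA α (j + 1)) (fun j => nicfE α (j + 1)) (qch α) (pch α) where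
  hq j := rfl
  hp j := rfl
  det j := by
    induction j with
    | zero => simp [qch, pch]
    | succ j ih =>
      have e2 := sgn_sq (nicf_E α (j + 1))
      have : qch α (j + 1 + 1) * pch α (j + 1) - qch α (j + 1) * pch α (j + 1 + 1) =
          -nicfE α (j + 1) * (qch α (j + 1) * pch α j - qch α j * pch α (j + 1)) := by
        simp only [qch, pch]; ring
      rw [this, mul_pow, ih, neg_sq, e2]; norm_num
  q0 := le_refl _
  qlt j := (qch_lt h h0 h1 j).2
  ynz j := by
    induction j with
    | zero => simp [qch, pch]
    | succ j ih =>
      rw [ych h h0 h1 j]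
      refine mul_ne_zero (mul_ne_zero (neg_ne_zero.2 ?_) (nicf_T h h0 h1 j).2.1.ne') ih
      rcases nicf_E α (j + 1) with he | he <;> rw [he] <;> norm_num
  yle j := by
    rw [ych h h0 h1 j, abs_mul, abs_mul]
    have e1 : |(-(nicfE α (j + 1)) : ℝ)| = 1 := by
      rcases nicf_E α (j + 1) with he | he <;> rw [he] <;> norm_num
    rw [e1, abs_of_pos (nicf_T h h0 h1 j).2.1]
    nlinarith [abs_nonneg ((qch α j : ℝ) * α - pch α j), (nicf_T h h0 h1 j).2.2]
  he j := nicf_E α (j + 1)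

lemma sgn_mul_pos {e a R : ℤ} (he : e = 1 ∨ e = -1) (ha : 2 ≤ a) (hR : 0 < R) (h : e * a = R) :
    e = 1 ∧ a = R := by
  rcases he with rfl | rfl
  · exact ⟨rfl, by linarith⟩
  · linarith

lemma sgn_mul_neg {e a R : ℤ} (he : e = 1 ∨ e = -1) (ha : 2 ≤ a) (hR : 0 < R) (h : e * a = -R) :
    e = -1 ∧ a = R := by
  rcases he with rfl | rfl
  · linarith
  · exact ⟨rfl, by linarith⟩

lemma per_nicf {α : ℝ} (h : Irrational α) (h0 : 0 < α) (h1 : α < 1 / 2) {R i : ℕ} (hR : 4 ≤ R)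
    (H : ∀ k : ℕ,
        nicfE α (i + 1 + 4 * k) * nicfA α (i + 1 + 4 * k) = -(R : ℤ) ∧
        nicfE α (i + 1 + 4 * k + 1) * nicfA α (i + 1 + 4 * k + 1) = (R : ℤ) ∧
        nicfE α (i + 1 + 4 * k + 2) * nicfA α (i + 1 + 4 * k + 2) = -((R : ℤ) + 1) ∧
        nicfE α (i + 1 + 4 * k + 3) * nicfA α (i + 1 + 4 * k + 3) = (R : ℤ) + 1) :
    Per (fun j => nicfA α (i + j + 1) - R) (fun j => nicfE α (i + j + 1)) := by
  have R0 : (0 : ℤ) < R := by omega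
  have R1 : (0 : ℤ) < (R : ℤ) + 1 := by omega
  have ix : ∀ k l, i + (4 * k + l) + 1 = i + 1 + 4 * k + l := fun k l => by ring
  have ix0 : ∀ k, i + 4 * k + 1 = i + 1 + 4 * k := fun k => by ring
  have k0 : ∀ k, _ := fun k => sgn_mul_neg (nicf_E α (i + 4 * k + 1)) (nicf_A h h0 h1 (i + 4 * k)) R0
    (by rw [ix0]; exact (H k).1)
  have k1 : ∀ k, _ := fun k => sgn_mul_pos (nicf_E α (i + (4 * k + 1) + 1))
    (nicf_A h h0 h1 (i + (4 * k + 1))) R0 (by rw [ix]; exact (H k).2.1)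
  have k2 : ∀ k, _ := fun k => sgn_mul_neg (nicf_E α (i + (4 * k + 2) + 1))
    (nicf_A h h0 h1 (i + (4 * k + 2))) R1 (by rw [ix]; exact (H k).2.2.1)
  have k3 : ∀ k, _ := fun k => sgn_mul_pos (nicf_E α (i + (4 * k + 3) + 1))
    (nicf_A h h0 h1 (i + (4 * k + 3))) R1 (by rw [ix]; exact (H k).2.2.2)
  refine ⟨fun k => ?_, fun k => ?_, fun k => ?_, fun k => ?_, fun k => (k0 k).1, fun k => (k1 k).1,
    fun k => (k2 k).1, fun k => (k3 k).1⟩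
  · rw [(k0 k).2]; ring
  · rw [(k1 k).2]; ring
  · rw [(k2 k).2]; ring
  · rw [(k3 k).2]; ring

lemma f_nonneg (α γ : ℝ) (n : ℤ) : 0 ≤ (|n| : ℝ) * nint (n * α - γ) :=
  mul_nonneg (abs_nonneg _) (abs_nonneg _)

lemma f_bdd (α γ : ℝ) :
    IsBoundedUnder (· ≥ ·) cofinite (fun n : ℤ => (|n| : ℝ) * nint (n * α - γ)) :=
  isBoundedUnder_of ⟨0, f_nonneg α γ⟩

lemma Mval_le {α γ m : ℝ}
    (h : ¬ ∀ᶠ n : ℤ in cofinite, m < (|n| : ℝ) * nint (n * α - γ)) : Mval α γ ≤ m := by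
  by_contra hc
  exact h (eventually_lt_of_lt_liminf (not_le.1 hc) (f_bdd α γ))

lemma le_Mval {α γ m K : ℝ}
    (h2 : ¬ ∀ᶠ n : ℤ in cofinite, K < (|n| : ℝ) * nint (n * α - γ))
    (h : ∀ᶠ n : ℤ in cofinite, m ≤ (|n| : ℝ) * nint (n * α - γ)) : m ≤ Mval α γ := by
  refine le_liminf_of_le ?_ h
  refine IsCoboundedUnder.of_frequently_le (a := K) ?_
  simpa only [not_eventually, not_lt] using h2

lemma rho_range {α : ℝ} (h : Irrational α) (h0 : 0 < α) (h1 : α < 1 / 2) :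
    0 ≤ rho α ∧ rho α ≤ 2 := by
  have H := ch_nicf h h0 h1
  constructor
  · refine Real.sSup_nonneg ?_
    rintro m ⟨γ, hγ, rfl⟩
    exact le_Mval (up_triv H hγ) (Eventually.of_forall (f_nonneg α γ))
  · refine Real.sSup_le ?_ (by norm_num)
    rintro m ⟨γ, hγ, rfl⟩
    exact Mval_le (up_triv H hγ)

lemma rho_between {α u l : ℝ} (h : Irrational α) (h0 : 0 < α) (h1 : α < 1 / 2)
    (hu : ∀ γ : ℝ, (¬∃ p q : ℤ, γ = (p : ℝ) + (q : ℝ) * α) →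
      ¬ ∀ᶠ n : ℤ in cofinite, u < (|n| : ℝ) * nint (n * α - γ))
    (hl : ∃ γ : ℝ, (¬∃ p q : ℤ, γ = (p : ℝ) + (q : ℝ) * α) ∧ ∀ᶠ n : ℤ in cofinite,
      l ≤ (|n| : ℝ) * nint (n * α - γ)) : l ≤ rho α ∧ rho α ≤ u := by
  have H := ch_nicf h h0 h1
  obtain ⟨γ, hγ, hg⟩ := hl
  have hub : ∀ m ∈ {m : ℝ | ∃ γ : ℝ, (¬∃ p q : ℤ, γ = (p : ℝ) + (q : ℝ) * α) ∧ m = Mval α γ},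
      m ≤ u := by
    rintro m ⟨γ, hγ, rfl⟩
    exact Mval_le (hu γ hγ)
  constructor
  · exact (le_Mval (up_triv H hγ) hg).trans (le_csSup ⟨u, hub⟩ ⟨γ, hγ, rfl⟩)
  · exact csSup_le ⟨_, γ, hγ, rfl⟩ hub

lemma final_est {α : ℝ} (h : Irrational α) (h0 : 0 < α) (h1 : α < 1 / 2) {R i : ℕ} (hR : 4 ≤ R)
    (H : Per (fun j => nicfA α (i + j + 1) - R) (fun j => nicfE α (i + j + 1))) {c : ℤ}
    (hc : ((R : ℤ) % 2 = 0 ∧ c = 4) ∨ ((R : ℤ) % 2 = 1 ∧ c = 5)) :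
    |rho α - 1 / 4 * (1 - 3 / (R : ℝ) + c / (R : ℝ) ^ 2)| ≤ 10 ^ 200 / (R : ℝ) ^ 3 := by
  have R4 : (4 : ℝ) ≤ R := by exact_mod_cast hR
  have R0 : (0 : ℝ) < R := by linarith
  set g : ℝ := 1 / (R : ℝ) with hg
  have g0 : 0 < g := by positivity
  have hRg : (R : ℝ) * g = 1 := by rw [hg]; field_simp
  have e1 : 1 - 3 / (R : ℝ) + c / (R : ℝ) ^ 2 = 1 - 3 * g + c * g ^ 2 := by rw [hg]; field_simp
  have e2 : (10 : ℝ) ^ 200 / (R : ℝ) ^ 3 = 10 ^ 200 * g ^ 3 := by rw [hg]; field_simp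
  rw [e1, e2]
  have g3 : 0 < g ^ 3 := by positivity
  rcases le_or_gt g (1 / 10 ^ 50) with hs | hs
  · have HC := (ch_nicf h h0 h1).shift i
    have ha : ∀ j, ((nicfA α (i + j + 1) : ℤ) : ℝ) = (R : ℝ) + ((nicfA α (i + j + 1) - R : ℤ) : ℝ) := by
      intro j; push_cast; ring
    have hRi : (R : ℝ) = ((R : ℤ) : ℝ) := by push_cast; rfl
    have hU := fun γ hγ => up_main (γ := γ) HC H g0 hs hRg ha hRi hc hγ
    have hL : ∃ γ : ℝ, (¬∃ p q : ℤ, γ = (p : ℝ) + (q : ℝ) * α) ∧ ∀ᶠ n : ℤ in cofinite,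
      (1 - 3 * g + c * g ^ 2 - 10 ^ 32 * g ^ 3) / 4 - g ^ 3 ≤ (|n| : ℝ) * nint (n * α - γ) := by
      rcases hc with ⟨hm, rfl⟩ | ⟨hm, rfl⟩
      · exact low_main HC H g0 hs hRg ha hRi (Or.inl rfl) (by norm_num) (by norm_num) (by norm_num)
          (by norm_num) (by omega) (by omega) (by omega) (by omega) pc2_1 pc2_2 mc2_e1 mc2_e2
      · exact low_main HC H g0 hs hRg ha hRi (Or.inr rfl) (by norm_num) (by norm_num) (by norm_num)
          (by norm_num) (by omega) (by omega) (by omega) (by omega) pc2_2 pc2_3 mc2_o1 mc2_o2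
    obtain ⟨hl, hu⟩ := rho_between h h0 h1 hU hL
    rw [abs_le]
    have : (10 : ℝ) ^ 32 * g ^ 3 / 4 + g ^ 3 ≤ 10 ^ 200 * g ^ 3 := by nlinarith
    constructor <;> linarith
  · obtain ⟨hl, hu⟩ := rho_range h h0 h1
    have gle : g ≤ 1 / 4 := by nlinarith
    have h3 : (1 / 10 ^ 50 : ℝ) ^ 3 ≤ g ^ 3 := by gcongr
    have h4 : (10 : ℝ) ≤ 10 ^ 200 * g ^ 3 := by
      calc (10 : ℝ) ≤ 10 ^ 200 * (1 / 10 ^ 50 : ℝ) ^ 3 := by norm_num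
        _ ≤ _ := by gcongr
    have hcr : (0 : ℝ) ≤ c ∧ (c : ℝ) ≤ 5 := by
      rcases hc with ⟨_, rfl⟩ | ⟨_, rfl⟩ <;> norm_num
    have h5 : 0 ≤ (c : ℝ) * g ^ 2 := mul_nonneg hcr.1 (by positivity)
    have h6 : (c : ℝ) * g ^ 2 ≤ 5 := by nlinarith [hcr.1, hcr.2, sq_nonneg g]
    rw [abs_le]
    constructor <;> linarith

/-- Theorem 2: the asymptotic value of `ρ(α)` for `α` with NICF expansion of eventual
period `-R, R, -(R+1), R+1`. -/
theorem stmt2 :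
    ∃ C : ℝ, 0 < C ∧ ∀ R : ℕ, 4 ≤ R → ∀ α : ℝ, Irrational α → 0 < α → α < 1 / 2 →
      (∃ i0 : ℕ, 1 ≤ i0 ∧ ∀ k : ℕ,
        nicfE α (i0 + 4 * k) * nicfA α (i0 + 4 * k) = -(R : ℤ) ∧
        nicfE α (i0 + 4 * k + 1) * nicfA α (i0 + 4 * k + 1) = (R : ℤ) ∧
        nicfE α (i0 + 4 * k + 2) * nicfA α (i0 + 4 * k + 2) = -((R : ℤ) + 1) ∧
        nicfE α (i0 + 4 * k + 3) * nicfA α (i0 + 4 * k + 3) = (R : ℤ) + 1) →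
      (Even R →
        |rho α - 1 / 4 * (1 - 3 / (R : ℝ) + 4 / (R : ℝ) ^ 2)| ≤ C / (R : ℝ) ^ 3) ∧
      (Odd R →
        |rho α - 1 / 4 * (1 - 3 / (R : ℝ) + 5 / (R : ℝ) ^ 2)| ≤ C / (R : ℝ) ^ 3) := by
  refine ⟨10 ^ 200, by positivity, ?_⟩
  intro R hR α h h0 h1 ⟨i0, hi, H⟩
  obtain ⟨i, rfl⟩ : ∃ i, i0 = i + 1 := ⟨i0 - 1, by omega⟩
  have hp := per_nicf h h0 h1 hR H
  constructor
  · rintro ⟨k, hk⟩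
    have := final_est h h0 h1 hR hp (c := 4) (Or.inl ⟨by omega, rfl⟩)
    push_cast at this
    exact this
  · rintro ⟨k, hk⟩
    have := final_est h h0 h1 hR hp (c := 5) (Or.inr ⟨by omega, rfl⟩)
    push_cast at this
    exact this
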